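/- Let f ∈ L^1(-1,1) and g ∈ LlogL(-1,1) be such that f·T(gχ_A) ∈ L^1(-1,1) for every Borel set A ⊆ (-1,1). Then the Poincaré–Bertrand formula T(gT(f) + fT(g)) = T(f)·T(g) − f·g holds almost everywhere on (-1,1). -/

import Mathlib

open MeasureTheory Set Filter

noncomputable section

/-- Lebesgue measure restricted to the interval `(-1, 1)`. -/
def μI : Measure ℝ := volume.restrict (Set.Ioo (-1 : ℝ) 1)

/-- The finite Hilbert transform: the principal-value limit
`T(f)(t) = lim_{ε→0⁺} (1/π) ∫_{x∈(-1,1), |x-t|≥ε} f(x)/(x-t) dx`. -/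
def FHT (f : ℝ → ℂ) (t : ℝ) : ℂ :=
  limUnder (nhdsWithin (0 : ℝ) (Set.Ioi 0)) fun ε : ℝ =>
    (Real.pi : ℂ)⁻¹ *
      ∫ x in {x : ℝ | x ∈ Set.Ioo (-1 : ℝ) 1 ∧ ε ≤ |x - t|}, f x / ((x : ℂ) - (t : ℂ))

/-- The operator `T̂(g)(x) = -(1-x²)^{-1/2} T(t ↦ √(1-t²) g(t))(x)`. -/
def hatT (g : ℝ → ℂ) (x : ℝ) : ℂ :=
  -((Real.sqrt (1 - x ^ 2) : ℂ))⁻¹ * FHT (fun t => (Real.sqrt (1 - t ^ 2) : ℂ) * g t) x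

/-- Membership in the Zygmund space `L log L(-1,1)`:
`f` is a.e. measurable on `(-1,1)` and `∫ |f| log⁺|f| < ∞`. -/
def MemLlogL (f : ℝ → ℂ) : Prop :=
  AEStronglyMeasurable f μI ∧
    IntegrableOn (fun x => ‖f x‖ * max (Real.log ‖f x‖) 0) (Set.Ioo (-1 : ℝ) 1)

/-- The distribution function `λ ↦ |{x ∈ (-1,1) : |f(x)| > λ}|`. -/
def distFun (f : ℝ → ℂ) (lam : ℝ) : ℝ :=
  (volume {x : ℝ | x ∈ Set.Ioo (-1 : ℝ) 1 ∧ lam < ‖f x‖}).toReal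

/-- The decreasing rearrangement `f*` of `f`, a function on `(0,2)`. -/
def decRearr (f : ℝ → ℂ) (t : ℝ) : ℝ :=
  sInf {lam : ℝ | 0 ≤ lam ∧ distFun f lam ≤ t}

/-- The `L log L` norm `‖f‖ = ∫_0^2 f*(t) log(2e/t) dt`. -/
def llogLNorm (f : ℝ → ℂ) : ℝ :=
  ∫ t in Set.Ioo (0 : ℝ) 2, decRearr f t * Real.log (2 * Real.exp 1 / t)

/-- The `L(log L)^α` norm `∫_0^2 f*(t) log^α(2e/t) dt` (for `α = 0` this is the `L¹` norm). -/
def zygNorm (α : ℝ) (f : ℝ → ℂ) : ℝ :=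
  ∫ t in Set.Ioo (0 : ℝ) 2, decRearr f t * Real.log (2 * Real.exp 1 / t) ^ α

/-- Membership in the Zygmund space `L(log L)^α(-1,1)`. -/
def MemZyg (α : ℝ) (f : ℝ → ℂ) : Prop :=
  AEStronglyMeasurable f μI ∧
    IntegrableOn (fun t => decRearr f t * Real.log (2 * Real.exp 1 / t) ^ α)
      (Set.Ioo (0 : ℝ) 2)

/-- Membership in `L(log L)²(-1,1)`: `∫ |f| (log(2+|f|))² < ∞`. -/
def MemLlogL2 (f : ℝ → ℂ) : Prop :=
  AEStronglyMeasurable f μI ∧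
    IntegrableOn (fun x => ‖f x‖ * Real.log (2 + ‖f x‖) ^ 2) (Set.Ioo (-1 : ℝ) 1)

/-- The constant `c(β,γ) = max{1/(1-β), 1/(1-γ), 1/(β+γ-1)}`. -/
def cBG (β γ : ℝ) : ℝ := max (max (1 / (1 - β)) (1 / (1 - γ))) (1 / (β + γ - 1))

open scoped Topology

/-- Poisson kernel (unnormalised). -/
def PK (y u : ℝ) : ℝ := y / (u ^ 2 + y ^ 2)

lemma PK_pos {y : ℝ} (hy : 0 < y) (u : ℝ) : 0 < PK y u := by
  unfold PK; positivity

lemma PK_cont {y : ℝ} (hy : 0 < y) : Continuous (PK y) := by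
  unfold PK
  refine continuous_const.div (by fun_prop) (fun u => by positivity)

lemma PK_eq {y : ℝ} (hy : 0 < y) (u : ℝ) : PK y u = y⁻¹ * (1 + (u * y⁻¹) ^ 2)⁻¹ := by
  unfold PK
  field_simp
  ring

lemma PK_integrable0 {y : ℝ} (hy : 0 < y) : Integrable (PK y) := by
  have h := (integrable_inv_one_add_sq.comp_mul_right' (inv_pos.2 hy).ne').const_mul y⁻¹
  exact h.congr (Eventually.of_forall fun u => (PK_eq hy u).symm)

lemma PK_integral0 {y : ℝ} (hy : 0 < y) : ∫ u, PK y u = Real.pi := by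
  simp_rw [PK_eq hy]
  rw [integral_const_mul, Measure.integral_comp_mul_right (fun u : ℝ => (1 + u ^ 2)⁻¹),
    integral_univ_inv_one_add_sq]
  rw [inv_inv, abs_of_pos hy, smul_eq_mul]
  field_simp

lemma PK_integrable {y : ℝ} (hy : 0 < y) (x : ℝ) : Integrable (fun s => PK y (s - x)) :=
  (PK_integrable0 hy).comp_sub_right x

lemma PK_integral {y : ℝ} (hy : 0 < y) (x : ℝ) : ∫ s, PK y (s - x) = Real.pi := by
  rw [integral_sub_right_eq_self (PK y) x, PK_integral0 hy]

lemma PK_mul_integrable {y M : ℝ} (hy : 0 < y) (x : ℝ) {u : ℝ → ℂ} (hu : Continuous u)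
    (hM : ∀ s, ‖u s‖ ≤ M) : Integrable (fun s => u s * (PK y (s - x) : ℂ)) := by
  have h : Integrable (fun s => (PK y (s - x) : ℂ)) := (PK_integrable hy x).ofReal
  exact h.bdd_mul hu.aestronglyMeasurable (Eventually.of_forall hM)

theorem poisson_rep {U : ℂ → ℂ} {δ M : ℝ} (hδ : 0 < δ)
    (hU : DifferentiableOn ℂ U {z | 0 < z.im}) (hM : ∀ z : ℂ, δ ≤ z.im → ‖U z‖ ≤ M)
    (x : ℝ) {y : ℝ} (hy : 0 < y) :
    ∫ s : ℝ, U (s + δ * Complex.I) * (PK y (s - x) : ℂ)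
      = Real.pi * U (x + (δ + y : ℝ) * Complex.I) := by
  set z : ℂ := x + (δ + y : ℝ) * Complex.I with hz
  set z' : ℂ := x + (δ - y : ℝ) * Complex.I with hz'
  have hzim : z.im = δ + y := by simp [hz]
  have hzre : z.re = x := by simp [hz]
  have hz'im : z'.im = δ - y := by simp [hz']
  have hz're : z'.re = x := by simp [hz']
  have hopen : IsOpen {z : ℂ | 0 < z.im} := isOpen_lt continuous_const Complex.continuous_im
  have hM0 : 0 ≤ M := (norm_nonneg _).trans (hM (δ * Complex.I) (by simp))
  set Q : ℂ → ℂ := fun w => dslope U z w / (w - z') with hQ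
  have hQd : DifferentiableOn ℂ Q {w | δ ≤ w.im} := by
    have h1 : DifferentiableOn ℂ (dslope U z) {z : ℂ | 0 < z.im} :=
      (Complex.differentiableOn_dslope (hopen.mem_nhds (by show 0 < z.im; rw [hzim]; linarith))).2 hU
    refine (h1.mono fun w (hw : δ ≤ w.im) => lt_of_lt_of_le hδ hw).div (by fun_prop) ?_
    intro w (hw : δ ≤ w.im) h
    have : w.im - z'.im = 0 := by rw [← Complex.sub_im, h]; simp
    rw [hz'im] at this; linarith
  have hQb : ∀ w : ℂ, δ ≤ w.im → ∀ a b : ℝ, 0 < a → 0 < b → a ≤ ‖w - z‖ → b ≤ ‖w - z'‖ →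
      ‖Q w‖ ≤ 2 * M / (a * b) := by
    intro w hw a b ha hb h1 h2
    have hwz : w ≠ z := by rintro rfl; simp at h1; linarith
    have e : Q w = (U w - U z) / ((w - z) * (w - z')) := by
      rw [hQ]; simp only; rw [dslope_of_ne _ hwz, slope_def_field, div_div]
    rw [e, norm_div, norm_mul]
    have : ‖U w - U z‖ ≤ 2 * M := by
      calc ‖U w - U z‖ ≤ ‖U w‖ + ‖U z‖ := norm_sub_le _ _
        _ ≤ 2 * M := by linarith [hM w hw, hM z (by rw [hzim]; linarith)]
    gcongr
  have hQline : ∀ s : ℝ, Q (s + δ * Complex.I) =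
      (U (s + δ * Complex.I) - U z) * ((y : ℂ)⁻¹ * (PK y (s - x) : ℂ)) := by
    intro s
    have hwz : (s + δ * Complex.I : ℂ) ≠ z := by
      intro h; have := congrArg Complex.im h; rw [hzim] at this; simp at this; linarith
    rw [hQ]; simp only; rw [dslope_of_ne _ hwz, slope_def_field, div_div]
    have : (s + δ * Complex.I - z) * (s + δ * Complex.I - z') = (((s - x) ^ 2 + y ^ 2 : ℝ) : ℂ) := by
      rw [hz, hz']; push_cast; ring_nf; rw [Complex.I_sq]; ring
    rw [this, PK]
    have h1 : (((s - x) ^ 2 + y ^ 2 : ℝ) : ℂ) ≠ 0 := by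
      rw [Complex.ofReal_ne_zero]; positivity
    have h2 : (y : ℂ) ≠ 0 := by exact_mod_cast hy.ne'
    rw [Complex.ofReal_div]
    field_simp
  have hUcont : Continuous (fun s : ℝ => U (s + δ * Complex.I)) := by
    refine hU.continuousOn.comp_continuous (by fun_prop) (fun s => by simpa using hδ)
  have hI1 : Integrable (fun s : ℝ => U (s + δ * Complex.I) * (PK y (s - x) : ℂ)) :=
    PK_mul_integrable hy x hUcont (fun s => hM _ (by simp))
  have hI2 : Integrable (fun s : ℝ => U z * (PK y (s - x) : ℂ)) :=
    ((PK_integrable hy x).ofReal).const_mul _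
  have hQi : Integrable (fun s : ℝ => Q (s + δ * Complex.I)) := by
    refine ((hI1.sub hI2).const_mul (y : ℂ)⁻¹).congr (Eventually.of_forall fun s => ?_)
    simp only [hQline, Pi.sub_apply]; ring
  have key : ∫ s : ℝ, Q (s + δ * Complex.I) = 0 := by
    have hlim : Tendsto (fun R : ℝ => ∫ s in (x - R)..(x + R), Q (s + δ * Complex.I)) atTop
        (𝓝 (∫ s : ℝ, Q (s + δ * Complex.I))) :=
      intervalIntegral_tendsto_integral hQi
        (tendsto_atBot_add_const_left _ x tendsto_neg_atTop_atBot)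
        (tendsto_atTop_add_const_left _ x tendsto_id)
    have hzero : Tendsto (fun R : ℝ => ∫ s in (x - R)..(x + R), Q (s + δ * Complex.I)) atTop
        (𝓝 0) := by
      have hb : Tendsto (fun R : ℝ => 16 * M / R) atTop (𝓝 0) := tendsto_const_nhds.div_atTop tendsto_id
      refine squeeze_zero_norm' ?_ hb
      filter_upwards [eventually_ge_atTop (2 * y + 1)] with R hR
      have hR0 : 0 < R := by linarith
      have hrect := Complex.integral_boundary_rect_eq_zero_of_differentiableOn Q
        (⟨x - R, δ⟩ : ℂ) (⟨x + R, δ + R⟩ : ℂ) (hQd.mono (by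
          intro w hw
          have := hw.2
          simp only [mem_preimage, uIcc_of_le (show δ ≤ δ + R by linarith)] at this
          exact this.1))
      simp only at hrect
      have top : ‖∫ s in (x - R)..(x + R), Q (s + ((δ + R : ℝ) : ℂ) * Complex.I)‖
          ≤ 2 * M / (R / 2 * R) * |(x + R) - (x - R)| := by
        refine intervalIntegral.norm_integral_le_of_norm_le_const fun s _ => ?_
        refine hQb _ (by simp; linarith) _ _ (by linarith) hR0 ?_ ?_
        · refine le_trans ?_ (Complex.abs_im_le_norm _)
          rw [Complex.sub_im, hzim]; simp
          rw [abs_of_pos (by linarith)]; linarith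
        · refine le_trans ?_ (Complex.abs_im_le_norm _)
          rw [Complex.sub_im, hz'im]; simp
          rw [abs_of_pos (by linarith)]; linarith
      have side : ∀ c : ℝ, |c| = R → ‖∫ t in δ..(δ + R), Q (((x + c : ℝ) : ℂ) + t * Complex.I)‖
          ≤ 2 * M / (R / 2 * R) * |(δ + R) - δ| := by
        intro c hc
        refine intervalIntegral.norm_integral_le_of_norm_le_const fun t ht => ?_
        rw [uIoc_of_le (by linarith)] at ht
        refine hQb _ (by simp; linarith [ht.1]) _ _ (by linarith) hR0 ?_ ?_
        · refine le_trans ?_ (Complex.abs_re_le_norm _)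
          rw [Complex.sub_re, hzre]; simp
          rw [hc]; linarith
        · refine le_trans ?_ (Complex.abs_re_le_norm _)
          rw [Complex.sub_re, hz're]; simp
          rw [hc]
      have s1 := side R (abs_of_pos hR0)
      have s2 := side (-R) (by rw [abs_neg, abs_of_pos hR0])
      rw [← sub_eq_add_neg] at s2
      rw [show |(x + R) - (x - R)| = 2 * R by rw [show (x + R) - (x - R) = 2 * R by ring]; exact abs_of_pos (by linarith)] at top
      rw [show |(δ + R) - δ| = R by rw [add_sub_cancel_left]; exact abs_of_pos hR0] at s1 s2
      set A := ∫ s in (x - R)..(x + R), Q (s + δ * Complex.I)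
      set T1 := ∫ s in (x - R)..(x + R), Q (s + ((δ + R : ℝ) : ℂ) * Complex.I)
      set S1 := ∫ t in δ..(δ + R), Q (((x + R : ℝ) : ℂ) + t * Complex.I)
      set S2 := ∫ t in δ..(δ + R), Q (((x - R : ℝ) : ℂ) + t * Complex.I)
      have hA : A = T1 - Complex.I • S1 + Complex.I • S2 := by
        linear_combination hrect
      rw [hA]
      have e1 : 2 * M / (R / 2 * R) * (2 * R) = 8 * M / R := by field_simp; ring
      have e2 : 2 * M / (R / 2 * R) * R = 4 * M / R := by field_simp; ring
      rw [e1] at top; rw [e2] at s1 s2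
      calc ‖T1 - Complex.I • S1 + Complex.I • S2‖ ≤ ‖T1‖ + ‖Complex.I • S1‖ + ‖Complex.I • S2‖ :=
            (norm_add_le _ _).trans (by gcongr; exact norm_sub_le _ _)
        _ ≤ 8 * M / R + 4 * M / R + 4 * M / R := by
            simp only [norm_smul, Complex.norm_I, one_mul]; gcongr
        _ = 16 * M / R := by ring
    exact tendsto_nhds_unique hlim hzero
  have e : ∫ s : ℝ, Q (s + δ * Complex.I) = (y : ℂ)⁻¹ * ((∫ s : ℝ, U (s + δ * Complex.I) * (PK y (s - x) : ℂ)) -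
      ∫ s : ℝ, U z * (PK y (s - x) : ℂ)) := by
    rw [← integral_sub hI1 hI2, ← integral_const_mul]
    refine integral_congr_ae (Eventually.of_forall fun s => ?_)
    simp only [hQline]; ring
  rw [e] at key
  have h2 : (y : ℂ)⁻¹ ≠ 0 := inv_ne_zero (by exact_mod_cast hy.ne')
  have := (mul_eq_zero.1 key).resolve_left h2
  rw [sub_eq_zero] at this
  rw [this, integral_const_mul, integral_complex_ofReal, PK_integral hy]
  ring

lemma PK_dyadic {ε : ℝ} (hε : 0 < ε) (u : ℝ) :
    ENNReal.ofReal (PK ε u) ≤ ∑' j : ℕ, ENNReal.ofReal (4 * (4 : ℝ)⁻¹ ^ j / ε) *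
      (Set.indicator {v : ℝ | |v| ≤ 2 ^ j * ε} (fun _ => (1 : ENNReal)) u) := by
  have hex : ∃ j : ℕ, |u| ≤ 2 ^ j * ε := by
    obtain ⟨j, hj⟩ := pow_unbounded_of_one_lt (|u| / ε) (one_lt_two)
    exact ⟨j, by rw [div_lt_iff₀ hε] at hj; exact hj.le⟩
  classical
  let j := Nat.find hex
  have hj : |u| ≤ 2 ^ j * ε := Nat.find_spec hex
  refine le_trans ?_ (ENNReal.le_tsum j)
  rw [Set.indicator_of_mem (by exact hj), mul_one]
  apply ENNReal.ofReal_le_ofReal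
  unfold PK
  rcases Nat.eq_zero_or_pos j with h0 | hpos
  · rw [h0, pow_zero, div_le_div_iff₀ (by positivity) hε]
    nlinarith [sq_nonneg u]
  · have hlt : 2 ^ (j - 1) * ε < |u| := by
      have := Nat.find_min hex (m := j - 1) (Nat.sub_lt hpos one_pos)
      exact not_le.1 this
    obtain ⟨k, hk⟩ : ∃ k, j = k + 1 := ⟨j - 1, by omega⟩
    rw [hk] at hlt ⊢
    simp only [Nat.add_sub_cancel] at hlt
    rw [div_le_div_iff₀ (by positivity) hε]
    have h1 : (2 ^ k * ε) ^ 2 ≤ u ^ 2 := by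
      rw [← sq_abs u]; gcongr
    have h2 : (4 : ℝ)⁻¹ ^ (k + 1) * 4 = (4 : ℝ)⁻¹ ^ k := by rw [pow_succ]; ring
    have h3 : (4 : ℝ)⁻¹ ^ k * (2 ^ k) ^ 2 = 1 := by
      rw [← pow_mul, mul_comm k 2, pow_mul, ← mul_pow]; norm_num
    calc ε * ε = (4 : ℝ)⁻¹ ^ k * (2 ^ k * ε) ^ 2 := by rw [mul_pow, ← mul_assoc, h3]; ring
      _ ≤ (4 : ℝ)⁻¹ ^ k * (u ^ 2 + ε ^ 2) := by gcongr; nlinarith [sq_nonneg ε]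
      _ = 4 * (4 : ℝ)⁻¹ ^ (k + 1) * (u ^ 2 + ε ^ 2) := by rw [← h2]; ring

lemma near_bound {φ : ℝ → ENNReal} (hφ : AEMeasurable φ) {x r0 η ε : ℝ} (hη : 0 ≤ η) (hε : 0 < ε)
    (hr0 : 0 < r0)
    (h : ∀ r, 0 < r → r ≤ r0 → ∫⁻ s in Metric.closedBall x r, φ s ≤ ENNReal.ofReal (2 * η * r)) :
    ∫⁻ s in Metric.closedBall x r0, ENNReal.ofReal (PK ε (s - x)) * φ s ≤ ENNReal.ofReal (16 * η) := by
  have hms : ∀ j : ℕ, MeasurableSet {v : ℝ | |v| ≤ 2 ^ j * ε} := fun j =>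
    measurableSet_le (by fun_prop) (by fun_prop)
  calc ∫⁻ s in Metric.closedBall x r0, ENNReal.ofReal (PK ε (s - x)) * φ s
      ≤ ∫⁻ s in Metric.closedBall x r0, ∑' j : ℕ, ENNReal.ofReal (4 * (4 : ℝ)⁻¹ ^ j / ε) *
      (Set.indicator {v : ℝ | |v| ≤ 2 ^ j * ε} (fun _ => (1 : ENNReal)) (s - x)) * φ s := by
        refine lintegral_mono fun s => ?_
        simp only
        rw [ENNReal.tsum_mul_right]
        gcongr
        exact PK_dyadic hε (s - x)
    _ = ∑' j : ℕ, ∫⁻ s in Metric.closedBall x r0, ENNReal.ofReal (4 * (4 : ℝ)⁻¹ ^ j / ε) *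
      (Set.indicator {v : ℝ | |v| ≤ 2 ^ j * ε} (fun _ => (1 : ENNReal)) (s - x)) * φ s := by
        refine lintegral_tsum fun j => ?_
        refine AEMeasurable.mul ?_ hφ.restrict
        refine (Measurable.const_mul ?_ _).aemeasurable
        exact (measurable_const.indicator (hms j)).comp (measurable_id.sub_const x)
    _ ≤ ∑' j : ℕ, ENNReal.ofReal (8 * η * (1 / 2) ^ j) := by
        refine ENNReal.tsum_le_tsum fun j => ?_
        have hp : (0 : ℝ) < 2 ^ j * ε := by positivity
        have key : ∫⁻ s in Metric.closedBall x r0, (Set.indicator {v : ℝ | |v| ≤ 2 ^ j * ε} (fun _ => (1 : ENNReal)) (s - x)) * φ s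
            ≤ ENNReal.ofReal (2 * η * (2 ^ j * ε)) := by
          have e : ∀ s, (Set.indicator {v : ℝ | |v| ≤ 2 ^ j * ε} (fun _ => (1 : ENNReal)) (s - x)) * φ s
              = (Metric.closedBall x (2 ^ j * ε)).indicator φ s := by
            intro s
            by_cases hs : |s - x| ≤ 2 ^ j * ε
            · rw [indicator_of_mem (by exact hs), indicator_of_mem (by simpa [Real.dist_eq] using hs), one_mul]
            · rw [indicator_of_notMem (by exact hs), indicator_of_notMem (by simpa [Real.dist_eq] using hs), zero_mul]
          simp_rw [e]
          rw [lintegral_indicator Metric.isClosed_closedBall.measurableSet,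
            Measure.restrict_restrict Metric.isClosed_closedBall.measurableSet]
          rcases le_total (2 ^ j * ε) r0 with hle | hle
          · exact (lintegral_mono_set inter_subset_left).trans (h _ hp hle)
          · refine (lintegral_mono_set inter_subset_right).trans ((h _ hr0 le_rfl).trans ?_)
            apply ENNReal.ofReal_le_ofReal; gcongr
        simp_rw [mul_assoc]
        rw [lintegral_const_mul' _ _ ENNReal.ofReal_ne_top]
        refine (mul_le_mul_right key _).trans ?_
        rw [← ENNReal.ofReal_mul (by positivity)]
        apply ENNReal.ofReal_le_ofReal
        apply le_of_eq
        have : (4 : ℝ)⁻¹ ^ j * 2 ^ j = (1 / 2) ^ j := by rw [← mul_pow]; norm_num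
        rw [← this]; field_simp; ring
    _ = ENNReal.ofReal (16 * η) := by
        rw [← ENNReal.ofReal_tsum_of_nonneg (fun j => by positivity)
          ((summable_geometric_two).mul_left _), tsum_mul_left, tsum_geometric_two]
        ring_nf

lemma weighted_locInt {h : ℝ → ℂ} (hw : Integrable (fun s => ((1 + s ^ 2)⁻¹ : ℝ) • h s)) :
    LocallyIntegrable h := by
  have h1 : LocallyIntegrable (fun s : ℝ => (1 + s ^ 2 : ℝ) • (((1 + s ^ 2)⁻¹ : ℝ) • h s)) := by
    rw [← locallyIntegrableOn_univ]
    exact (hw.locallyIntegrable.locallyIntegrableOn univ).continuousOn_smul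
      isOpen_univ.isLocallyClosed (Continuous.continuousOn (by fun_prop))
  refine h1.congr (Eventually.of_forall fun s => ?_)
  have : (1 + s ^ 2 : ℝ) ≠ 0 := by positivity
  simp only [smul_smul]
  rw [mul_inv_cancel₀ this, one_smul]

theorem lebesgue_poisson {h : ℝ → ℂ} (hw : Integrable (fun s => ((1 + s ^ 2)⁻¹ : ℝ) • h s)) :
    ∀ᵐ x, Tendsto (fun ε => ∫ s, PK ε (s - x) * ‖h s - h x‖) (𝓝[>] 0) (𝓝 0) := by
  have hloc := weighted_locInt hw
  filter_upwards [IsUnifLocDoublingMeasure.ae_tendsto_average_norm_sub volume hloc 1] with x hx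
  have hx' := hx (l := 𝓝[>] (0 : ℝ)) (fun _ => x) (fun r => r) tendsto_id (by
    filter_upwards [self_mem_nhdsWithin] with r hr
    simpa using (le_of_lt hr : (0 : ℝ) ≤ r))
  have hφm : AEStronglyMeasurable (fun s => ‖h s - h x‖) volume :=
    (hloc.aestronglyMeasurable.sub aestronglyMeasurable_const).norm
  have hφl : LocallyIntegrable (fun s => ‖h s - h x‖) := by
    intro y
    exact ((hloc.sub (locallyIntegrable_const (h x))) y).norm
  have hφw : Integrable (fun s => (1 + s ^ 2)⁻¹ * ‖h s - h x‖) := by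
    have := (hw.sub (integrable_inv_one_add_sq.smul_const (h x))).norm
    refine this.congr (Eventually.of_forall fun s => ?_)
    simp only [Pi.sub_apply]
    rw [← smul_sub, norm_smul, Real.norm_of_nonneg (by positivity)]
  have hφe : AEMeasurable (fun s => ENNReal.ofReal ‖h s - h x‖) := hφm.aemeasurable.ennreal_ofReal
  set W := ∫ s, (1 + s ^ 2)⁻¹ * ‖h s - h x‖ with hW
  have hW0 : 0 ≤ W := integral_nonneg fun s => by positivity
  rw [Metric.tendsto_nhds]
  intro e he
  have hev := hx'.eventually (gt_mem_nhds (show (0 : ℝ) < e / 64 by positivity))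
  rw [eventually_nhdsWithin_iff, Metric.eventually_nhds_iff] at hev
  obtain ⟨r1, hr1, hr1'⟩ := hev
  set r0 := r1 / 2 with hr0d
  have hr0 : 0 < r0 := by positivity
  have hnear : ∀ r, 0 < r → r ≤ r0 → ∫⁻ s in Metric.closedBall x r, ENNReal.ofReal ‖h s - h x‖
      ≤ ENNReal.ofReal (2 * (e / 64) * r) := by
    intro r hr hrr
    have := hr1' (y := r) (by rw [Real.dist_eq, sub_zero, abs_of_pos hr]; linarith) hr
    rw [setAverage_eq, measureReal_def, Real.volume_closedBall, smul_eq_mul,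
      ENNReal.toReal_ofReal (by positivity), inv_mul_lt_iff₀ (by positivity)] at this
    rw [← ofReal_integral_eq_lintegral_ofReal
      (hφl.integrableOn_isCompact (isCompact_closedBall x r)) (Eventually.of_forall fun s => norm_nonneg _)]
    apply ENNReal.ofReal_le_ofReal
    linarith
  set C := (1 + 2 * x ^ 2) / r0 ^ 2 + 2 with hC
  have hC0 : 0 < C := by positivity
  have hsmall : ∀ᶠ ε in 𝓝[>] (0 : ℝ), ε * (C * W) < e / 4 := by
    have : Tendsto (fun ε : ℝ => ε * (C * W)) (𝓝[>] 0) (𝓝 (0 * (C * W))) :=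
      (tendsto_nhdsWithin_of_tendsto_nhds tendsto_id).mul_const _
    rw [zero_mul] at this
    exact this.eventually (gt_mem_nhds (by positivity))
  filter_upwards [hsmall, self_mem_nhdsWithin] with ε hε1 hε0
  have hε0 : 0 < ε := hε0
  rw [Real.dist_eq, sub_zero, abs_of_nonneg (integral_nonneg fun s => mul_nonneg (PK_pos hε0 _).le (norm_nonneg _))]
  have hfar : ∫⁻ s in (Metric.closedBall x r0)ᶜ, ENNReal.ofReal (PK ε (s - x)) * ENNReal.ofReal ‖h s - h x‖
      ≤ ENNReal.ofReal (ε * (C * W)) := by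
    calc _ ≤ ∫⁻ s in (Metric.closedBall x r0)ᶜ, ENNReal.ofReal (ε * C * ((1 + s ^ 2)⁻¹ * ‖h s - h x‖)) := by
          refine setLIntegral_mono' Metric.isClosed_closedBall.measurableSet.compl fun s hs => ?_
          rw [← ENNReal.ofReal_mul (PK_pos hε0 _).le]
          apply ENNReal.ofReal_le_ofReal
          rw [← mul_assoc]
          gcongr
          simp only [mem_compl_iff, Metric.mem_closedBall, Real.dist_eq, not_le] at hs
          have hu : r0 ^ 2 ≤ (s - x) ^ 2 := by rw [← sq_abs (s - x)]; gcongr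
          have hu0 : 0 < (s - x) ^ 2 := lt_of_lt_of_le (by positivity) hu
          unfold PK
          rw [← div_eq_mul_inv, div_le_div_iff₀ (by positivity) (by positivity), mul_assoc]
          gcongr
          have : (1 + 2 * x ^ 2) / r0 ^ 2 * (s - x) ^ 2 ≥ 1 + 2 * x ^ 2 := by
            rw [div_mul_eq_mul_div, ge_iff_le, le_div_iff₀ (by positivity)]
            gcongr
          have h2 : C * ((s - x) ^ 2 + ε ^ 2) ≥ C * (s - x) ^ 2 := by
            have : 0 ≤ ε ^ 2 := by positivity
            gcongr; linarith
          rw [hC, add_mul] at h2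
          nlinarith [sq_nonneg (s - 2 * x)]
      _ ≤ ∫⁻ s, ENNReal.ofReal (ε * C * ((1 + s ^ 2)⁻¹ * ‖h s - h x‖)) := setLIntegral_le_lintegral _ _
      _ = ENNReal.ofReal (ε * (C * W)) := by
          rw [← ofReal_integral_eq_lintegral_ofReal (hφw.const_mul _)
            (Eventually.of_forall fun s => by positivity), integral_const_mul, mul_assoc]
  have htot : ∫⁻ s, ENNReal.ofReal (PK ε (s - x) * ‖h s - h x‖) ≤ ENNReal.ofReal (16 * (e / 64) + ε * (C * W)) := by
    rw [← lintegral_add_compl _ (Metric.isClosed_closedBall (x := x) (ε := r0)).measurableSet,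
      ENNReal.ofReal_add (by positivity) (by positivity)]
    simp_rw [ENNReal.ofReal_mul (PK_pos hε0 _).le]
    exact add_le_add (near_bound hφe (by positivity) hε0 hr0 hnear) hfar
  have hPm : AEStronglyMeasurable (fun s => PK ε (s - x)) volume := (PK_integrable hε0 x).1
  rw [integral_eq_lintegral_of_nonneg_ae
    (Eventually.of_forall fun s => mul_nonneg (PK_pos hε0 _).le (norm_nonneg _))
    (hPm.mul hφm)]
  refine lt_of_le_of_lt (ENNReal.toReal_le_of_le_ofReal (by positivity) htot) ?_
  linarith

def rho (s : ℝ) : NNReal := Real.toNNReal ((1 + s ^ 2)⁻¹)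

lemma rho_meas : Measurable rho := by unfold rho; fun_prop

lemma rho_smul (s : ℝ) (c : ℂ) : rho s • c = ((1 + s ^ 2)⁻¹ : ℝ) • c := by
  rw [NNReal.smul_def, rho, Real.coe_toNNReal _ (by positivity)]

def nuM : Measure ℝ := volume.withDensity (fun s => (rho s : ENNReal))

instance : IsFiniteMeasure nuM := by
  refine isFiniteMeasure_withDensity ?_
  have := (integrable_inv_one_add_sq).lintegral_lt_top
  exact this.ne

lemma nu_integral (f : ℝ → ℂ) : ∫ s, f s ∂nuM = ∫ s, ((1 + s ^ 2)⁻¹ : ℝ) • f s := by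
  unfold nuM
  rw [integral_withDensity_eq_integral_smul rho_meas]
  simp_rw [rho_smul]

lemma nu_integrable (f : ℝ → ℂ) :
    Integrable f nuM ↔ Integrable (fun s => ((1 + s ^ 2)⁻¹ : ℝ) • f s) := by
  unfold nuM
  rw [integrable_withDensity_iff_integrable_smul rho_meas]
  simp_rw [rho_smul]

lemma kern_bound (x : ℝ) {y : ℝ} (hy : 0 < y) (s : ℝ) :
    ‖((PK y (s - x) * (1 + s ^ 2) : ℝ) : ℂ)‖ ≤ y * ((1 + 2 * x ^ 2) / y ^ 2 + 2) := by
  rw [Complex.norm_real, Real.norm_of_nonneg (mul_nonneg (PK_pos hy _).le (by positivity))]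
  unfold PK
  rw [div_mul_eq_mul_div, div_le_iff₀ (by positivity), mul_assoc]
  gcongr
  have h1 : (1 + 2 * x ^ 2) / y ^ 2 * y ^ 2 = 1 + 2 * x ^ 2 := by field_simp
  have h2 : 0 ≤ (1 + 2 * x ^ 2) / y ^ 2 * (s - x) ^ 2 := by positivity
  nlinarith [sq_nonneg (s - 2 * x), sq_nonneg y]

theorem fatou_bounded {U : ℂ → ℂ} {M : ℝ} (hU : DifferentiableOn ℂ U {z | 0 < z.im})
    (hM : ∀ z : ℂ, 0 < z.im → ‖U z‖ ≤ M) :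
    ∀ᵐ x : ℝ, ∃ l, Tendsto (fun ε : ℝ => U (x + ε * Complex.I)) (𝓝[>] 0) (𝓝 l) := by
  set d : ℕ → ℝ := fun n => 1 / ((n : ℝ) + 1) with hd
  have hd0 : ∀ n, 0 < d n := fun n => by positivity
  set u : ℕ → ℝ → ℂ := fun n s => U (s + d n * Complex.I) with hu
  have hucont : ∀ n, Continuous (u n) := fun n =>
    hU.continuousOn.comp_continuous (by fun_prop) (fun s => by simpa using hd0 n)
  have hub : ∀ n s, ‖u n s‖ ≤ M := fun n s => hM _ (by simpa using hd0 n)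
  have humem : ∀ n, MemLp (u n) 2 nuM := fun n =>
    MemLp.of_bound (hucont n).aestronglyMeasurable M (Eventually.of_forall (hub n))
  set un : ℕ → Lp ℂ 2 nuM := fun n => (humem n).toLp (u n) with hun
  obtain ⟨R, hR⟩ : ∃ R, ∀ n, ‖un n‖ ≤ R := by
    refine ⟨_, fun n => Lp.norm_le_of_ae_bound (C := M) ((norm_nonneg _).trans (hub 0 0)) ?_⟩
    filter_upwards [(humem n).coeFn_toLp] with s hs
    rw [hun]; simp only; rw [hs]; exact hub n s
  have hcpt := WeakDual.isCompact_closedBall (𝕜 := ℂ) (E := Lp ℂ 2 nuM) 0 R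
  set Φ : ℕ → WeakDual ℂ (Lp ℂ 2 nuM) := fun n =>
    StrongDual.toWeakDual (InnerProductSpace.toDual ℂ (Lp ℂ 2 nuM) (un n)) with hΦ
  have hΦmem : ∀ n, Φ n ∈ WeakDual.toStrongDual ⁻¹' Metric.closedBall (0 : StrongDual ℂ (Lp ℂ 2 nuM)) R := by
    intro n
    simp only [hΦ, mem_preimage, Metric.mem_closedBall, dist_zero_right]
    exact (LinearIsometryEquiv.norm_map (InnerProductSpace.toDual ℂ (Lp ℂ 2 nuM)) (un n)).le.trans (hR n)
  obtain ⟨φ, -, hφ⟩ := hcpt.ultrafilter_le_nhds ((hyperfilter ℕ).map Φ)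
    (by
      rw [Ultrafilter.coe_map, le_principal_iff, mem_map]
      exact Eventually.of_forall hΦmem)
  set v : Lp ℂ 2 nuM := (InnerProductSpace.toDual ℂ (Lp ℂ 2 nuM)).symm (WeakDual.toStrongDual φ) with hv
  have hlim : ∀ k : Lp ℂ 2 nuM, Tendsto (fun n => inner ℂ (un n) k) (hyperfilter ℕ) (𝓝 (inner ℂ v k)) := by
    intro k
    have h1 : Tendsto Φ (hyperfilter ℕ) (𝓝 φ) := hφ
    have h2 := ((WeakDual.eval_continuous k).tendsto φ).comp h1
    have e : inner ℂ v k = φ k := by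
      rw [hv, InnerProductSpace.toDual_symm_apply]; rfl
    rw [e]
    exact h2
  have hvint : Integrable (v : ℝ → ℂ) nuM := (Lp.memLp v).integrable (by norm_num)
  have hvw := (nu_integrable _).1 hvint
  have hvPK : ∀ (x : ℝ) {y : ℝ}, 0 < y → Integrable (fun s => v s * (PK y (s - x) : ℂ)) := by
    intro x y hy
    have := hvw.mul_bdd (c := y * ((1 + 2 * x ^ 2) / y ^ 2 + 2)) (g := fun s => ((PK y (s - x) * (1 + s ^ 2) : ℝ) : ℂ))
      (by
        refine Continuous.aestronglyMeasurable ?_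
        exact Complex.continuous_ofReal.comp (((PK_cont hy).comp (by fun_prop)).mul (by fun_prop)))
      (Eventually.of_forall fun s => kern_bound x hy s)
    refine this.congr (Eventually.of_forall fun s => ?_)
    have h1 : (1 + s ^ 2 : ℂ) ≠ 0 := by
      have : (1 + s ^ 2 : ℝ) ≠ 0 := by positivity
      exact_mod_cast this
    simp only [Complex.real_smul]
    push_cast
    field_simp
  have hrep : ∀ (x : ℝ) {y : ℝ}, 0 < y →
      ∫ s, v s * (PK y (s - x) : ℂ) = Real.pi * U (x + y * Complex.I) := by
    intro x y hy
    set kf : ℝ → ℂ := fun s => ((PK y (s - x) * (1 + s ^ 2) : ℝ) : ℂ) with hkf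
    have hkmem : MemLp kf 2 nuM := MemLp.of_bound (by
        refine Continuous.aestronglyMeasurable ?_
        exact Complex.continuous_ofReal.comp (((PK_cont hy).comp (by fun_prop)).mul (by fun_prop)))
        _ (Eventually.of_forall fun s => kern_bound x hy s)
    set k := hkmem.toLp kf with hk
    have gen : ∀ (w : Lp ℂ 2 nuM) (w0 : ℝ → ℂ), w =ᵐ[nuM] w0 →
        inner ℂ w k = (starRingEnd ℂ) (∫ s, w0 s * (PK y (s - x) : ℂ)) := by
      intro w w0 hw
      rw [L2.inner_def, ← integral_conj]
      have : ∫ a, inner ℂ (w a) (k a) ∂nuM = ∫ a, (starRingEnd ℂ) (w0 a) * kf a ∂nuM := by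
        refine integral_congr_ae ?_
        filter_upwards [hw, hkmem.coeFn_toLp] with a h1 h2
        rw [h1, hk, h2, RCLike.inner_apply, mul_comm]
      rw [this, nu_integral]
      refine integral_congr_ae (Eventually.of_forall fun s => ?_)
      have h1 : (1 + s ^ 2 : ℂ) ≠ 0 := by
        have : (1 + s ^ 2 : ℝ) ≠ 0 := by positivity
        exact_mod_cast this
      simp only [Complex.real_smul, hkf, map_mul, Complex.conj_ofReal]
      push_cast
      field_simp
    have h1 := hlim k
    rw [gen v v (EventuallyEq.refl _ _)] at h1
    have h2 : ∀ n, inner ℂ (un n) k = (starRingEnd ℂ) (Real.pi * U (x + (d n + y : ℝ) * Complex.I)) := by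
      intro n
      rw [gen (un n) (u n) (humem n).coeFn_toLp]
      rw [← poisson_rep (hd0 n) hU (fun z hz => hM z (lt_of_lt_of_le (hd0 n) hz)) x hy]
    simp_rw [h2] at h1
    have h3 : Tendsto (fun n => (starRingEnd ℂ) (Real.pi * U (x + (d n + y : ℝ) * Complex.I))) (hyperfilter ℕ)
        (𝓝 ((starRingEnd ℂ) (Real.pi * U (x + y * Complex.I)))) := by
      refine (Complex.continuous_conj.tendsto _).comp (Tendsto.const_mul _ ?_)
      have hc : ContinuousAt U (x + y * Complex.I) :=
        (hU.differentiableAt ((isOpen_lt continuous_const Complex.continuous_im).mem_nhds (by simpa using hy))).continuousAt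
      refine hc.tendsto.comp ?_
      refine Tendsto.mono_left ?_ (Nat.hyperfilter_le_atTop)
      refine tendsto_const_nhds.add (Tendsto.mul_const _ ?_)
      refine (Complex.continuous_ofReal.tendsto _).comp ?_
      have := (tendsto_one_div_add_atTop_nhds_zero_nat (𝕜 := ℝ)).add_const y
      simpa [hd] using this
    have := tendsto_nhds_unique h1 h3
    exact (starRingEnd ℂ).injective this
  filter_upwards [lebesgue_poisson hvw] with x hx
  refine ⟨v x, ?_⟩
  rw [tendsto_iff_norm_sub_tendsto_zero]
  have hx' := hx.const_mul (Real.pi⁻¹)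
  rw [mul_zero] at hx'
  refine squeeze_zero' (Eventually.of_forall fun _ => norm_nonneg _) ?_ hx'
  filter_upwards [self_mem_nhdsWithin] with ε (hε : 0 < ε)
  have hpi : (Real.pi : ℂ) ≠ 0 := by exact_mod_cast Real.pi_ne_zero
  have e : U (x + ε * Complex.I) - v x = (Real.pi : ℂ)⁻¹ * ∫ s, (v s - v x) * (PK ε (s - x) : ℂ) := by
    have : ∫ s, (v s - v x) * (PK ε (s - x) : ℂ) = Real.pi * U (x + ε * Complex.I) - v x * Real.pi := by
      simp_rw [sub_mul]
      have hI : Integrable (fun s => (PK ε (s - x) : ℂ)) := (PK_integrable hε x).ofReal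
      rw [integral_sub (hvPK x hε) (hI.const_mul _), hrep x hε,
        integral_const_mul, integral_complex_ofReal, PK_integral hε]
    rw [this]; field_simp
  rw [e, norm_mul, norm_inv, Complex.norm_real, Real.norm_of_nonneg Real.pi_pos.le]
  gcongr
  refine (norm_integral_le_integral_norm _).trans (le_of_eq ?_)
  refine integral_congr_ae (Eventually.of_forall fun s => ?_)
  simp only
  rw [norm_mul, Complex.norm_real, Real.norm_of_nonneg (PK_pos hε _).le, mul_comm]

instance : IsFiniteMeasure μI := by
  unfold μI
  exact ⟨by simp⟩

lemma muI_real_univ : μI.real univ = 2 := by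
  unfold μI
  simp [measureReal_def, Real.volume_Ioo]
  norm_num

/-- Cauchy transform. -/
def CT (f : ℝ → ℂ) (z : ℂ) : ℂ := (Real.pi : ℂ)⁻¹ * ∫ s, f s / ((s : ℂ) - z) ∂μI

lemma sub_ne {z : ℂ} (hz : z.im ≠ 0) (s : ℝ) : (s : ℂ) - z ≠ 0 := by
  intro h; apply hz
  have := congrArg Complex.im h
  simpa using this

lemma im_le_norm_sub (z : ℂ) (s : ℝ) : |z.im| ≤ ‖(s : ℂ) - z‖ := by
  have := Complex.abs_im_le_norm ((s : ℂ) - z)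
  simpa using this

lemma kern_norm_le {z : ℂ} (hz : z.im ≠ 0) (s : ℝ) : ‖((s : ℂ) - z)⁻¹‖ ≤ |z.im|⁻¹ := by
  rw [norm_inv]
  have : 0 < |z.im| := abs_pos.2 hz
  gcongr
  exact im_le_norm_sub z s

lemma kern_cont {z : ℂ} (hz : z.im ≠ 0) : Continuous (fun s : ℝ => ((s : ℂ) - z)⁻¹) :=
  Continuous.inv₀ (by fun_prop) (sub_ne hz)

lemma CT_int {f : ℝ → ℂ} (hf : Integrable f μI) {z : ℂ} (hz : z.im ≠ 0) :
    Integrable (fun s => f s / ((s : ℂ) - z)) μI := by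
  simp_rw [div_eq_mul_inv]
  exact hf.mul_bdd (kern_cont hz).aestronglyMeasurable (Eventually.of_forall (kern_norm_le hz))

lemma CT_norm_le {f : ℝ → ℂ} (hf : Integrable f μI) {z : ℂ} (hz : z.im ≠ 0) :
    ‖CT f z‖ ≤ Real.pi⁻¹ * (|z.im|⁻¹ * ∫ s, ‖f s‖ ∂μI) := by
  unfold CT
  rw [norm_mul, norm_inv, Complex.norm_real, Real.norm_of_nonneg Real.pi_pos.le]
  have := Real.pi_pos
  gcongr
  refine (norm_integral_le_integral_norm _).trans ?_
  rw [← integral_const_mul]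
  refine integral_mono (CT_int hf hz).norm (hf.norm.const_mul _) fun s => ?_
  simp only
  rw [div_eq_mul_inv, norm_mul, mul_comm]
  gcongr
  exact kern_norm_le hz s

lemma CT_diff {f : ℝ → ℂ} (hf : Integrable f μI) : DifferentiableOn ℂ (CT f) {z | 0 < z.im} := by
  intro z (hz : 0 < z.im)
  apply DifferentiableAt.differentiableWithinAt
  unfold CT
  refine DifferentiableAt.const_mul ?_ _
  set S : Set ℂ := {w | z.im / 2 < w.im}
  have hS : S ∈ 𝓝 z := (isOpen_lt continuous_const Complex.continuous_im).mem_nhds (by show z.im / 2 < z.im; linarith)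
  have hS' : ∀ w ∈ S, w.im ≠ 0 := fun w hw => by
    have : z.im / 2 < w.im := hw
    linarith
  refine (hasDerivAt_integral_of_dominated_loc_of_deriv_le (𝕜 := ℂ) (s := S)
    (F := fun w s => f s / ((s : ℂ) - w)) (F' := fun w s => f s * (((s : ℂ) - w)⁻¹ * ((s : ℂ) - w)⁻¹))
    (bound := fun s => ‖f s‖ * ((z.im / 2)⁻¹ * (z.im / 2)⁻¹)) hS ?_ (CT_int hf hz.ne') ?_ ?_ (hf.norm.mul_const _) ?_).2.differentiableAt
  · filter_upwards [hS] with w hw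
    exact (CT_int hf (hS' w hw)).1
  · exact hf.1.mul ((kern_cont hz.ne').mul (kern_cont hz.ne')).aestronglyMeasurable
  · refine Eventually.of_forall fun s w hw => ?_
    have hw' : z.im / 2 < w.im := hw
    have : ‖((s : ℂ) - w)⁻¹‖ ≤ (z.im / 2)⁻¹ := by
      refine (kern_norm_le (hS' w hw) s).trans ?_
      rw [abs_of_pos (by linarith)]
      gcongr
    rw [norm_mul, norm_mul]
    gcongr
  · refine Eventually.of_forall fun s w hw => ?_
    have h1 : HasDerivAt (fun w : ℂ => (s : ℂ) - w) (-1) w := by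
      simpa using (hasDerivAt_id w).const_sub (s : ℂ)
    have h2 := (h1.inv (sub_ne (hS' w hw) s)).const_mul (f s)
    have h3 := sub_ne (hS' w hw) s
    refine h2.congr_deriv ?_
    field_simp

lemma CT_add {f g : ℝ → ℂ} (hf : Integrable f μI) (hg : Integrable g μI) {z : ℂ} (hz : z.im ≠ 0) :
    CT (fun s => f s + g s) z = CT f z + CT g z := by
  unfold CT
  simp_rw [add_div]
  rw [integral_add (CT_int hf hz) (CT_int hg hz), mul_add]

lemma CT_smul (c : ℂ) (f : ℝ → ℂ) (z : ℂ) : CT (fun s => c * f s) z = c * CT f z := by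
  unfold CT
  simp_rw [mul_div_assoc]
  rw [integral_const_mul]; ring

lemma CT_sub {f g : ℝ → ℂ} (hf : Integrable f μI) (hg : Integrable g μI) {z : ℂ} (hz : z.im ≠ 0) :
    CT (fun s => f s - g s) z = CT f z - CT g z := by
  unfold CT
  simp_rw [sub_div]
  rw [integral_sub (CT_int hf hz) (CT_int hg hz), mul_sub]

lemma CT_neg (f : ℝ → ℂ) (z : ℂ) : CT (fun s => - f s) z = - CT f z := by
  have := CT_smul (-1) f z
  simpa using this

lemma CT_conj (f : ℝ → ℂ) (z : ℂ) :
    CT (fun s => (starRingEnd ℂ) (f s)) ((starRingEnd ℂ) z) = (starRingEnd ℂ) (CT f z) := by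
  unfold CT
  rw [map_mul, ← integral_conj]
  simp

lemma CT_im {r : ℝ → ℝ} (hr : Integrable r μI) (x : ℝ) {y : ℝ} (hy : 0 < y) :
    (CT (fun s => (r s : ℂ)) (x + y * Complex.I)).im = Real.pi⁻¹ * ∫ s, r s * PK y (s - x) ∂μI := by
  unfold CT
  have hi := CT_int (hr.ofReal (𝕜 := ℂ)) (z := x + y * Complex.I) (by simpa using hy.ne')
  rw [← Complex.ofReal_inv, Complex.im_ofReal_mul]
  congr 1
  have := integral_im hi
  simp only [RCLike.im_to_complex] at this
  refine this.symm.trans (integral_congr_ae (Eventually.of_forall fun s => ?_))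
  simp only [Complex.coe_algebraMap, PK]
  rw [Complex.div_im]
  simp [Complex.normSq_apply]
  ring

lemma CT_im_nonneg {r : ℝ → ℝ} (hr : Integrable r μI) (h0 : ∀ s, 0 ≤ r s) {z : ℂ} (hz : 0 < z.im) :
    0 ≤ (CT (fun s => (r s : ℂ)) z).im := by
  have e : z = (z.re : ℂ) + z.im * Complex.I := (Complex.re_add_im z).symm
  rw [e, CT_im hr _ hz]
  refine mul_nonneg (by positivity) (integral_nonneg fun s => mul_nonneg (h0 s) (PK_pos hz _).le)

lemma CT_im_abs_le {r : ℝ → ℝ} (hr : Integrable r μI) (h1 : ∀ s, |r s| ≤ 1) {z : ℂ} (hz : 0 < z.im) :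
    |(CT (fun s => (r s : ℂ)) z).im| ≤ 1 := by
  have e : z = (z.re : ℂ) + z.im * Complex.I := (Complex.re_add_im z).symm
  rw [e, CT_im hr _ hz, abs_mul, abs_of_pos (inv_pos.2 Real.pi_pos), inv_mul_le_iff₀ Real.pi_pos, mul_one]
  refine (abs_integral_le_integral_abs).trans ?_
  rw [← PK_integral hz z.re]
  have hle : μI ≤ volume := Measure.restrict_le_self
  refine le_trans ?_ (integral_mono_measure hle (Eventually.of_forall fun s => (PK_pos hz _).le) (PK_integrable hz z.re))
  refine integral_mono_of_nonneg (Eventually.of_forall fun s => abs_nonneg _)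
    ((PK_integrable hz z.re).mono_measure hle) (Eventually.of_forall fun s => ?_)
  simp only
  rw [abs_mul, abs_of_pos (PK_pos hz _)]
  exact mul_le_of_le_one_left (PK_pos hz _).le (h1 s)

/-- Integral bound on `(-1,1)` from the Poisson representation. -/
lemma poisson_re_bound {U : ℂ → ℂ} {δ M : ℝ} (hδ : 0 < δ)
    (hU : DifferentiableOn ℂ U {z | 0 < z.im}) (hM : ∀ z : ℂ, δ ≤ z.im → ‖U z‖ ≤ M)
    (h0 : ∀ z : ℂ, 0 < z.im → 0 ≤ (U z).re) :
    ∫⁻ s : ℝ, ENNReal.ofReal (U (s + δ * Complex.I)).re ∂μI ≤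
      ENNReal.ofReal (2 * (Real.pi * ‖U ((0 : ℝ) + (δ + 1 : ℝ) * Complex.I)‖)) := by
  have hP := poisson_rep hδ hU hM 0 one_pos
  have hUcont : Continuous (fun s : ℝ => U (s + δ * Complex.I)) := by
    refine hU.continuousOn.comp_continuous (by fun_prop) (fun s => by simpa using hδ)
  have hI : Integrable (fun s : ℝ => U (s + δ * Complex.I) * (PK 1 (s - 0) : ℂ)) :=
    PK_mul_integrable one_pos 0 hUcont (fun s => hM _ (by simp))
  have hre : ∫ s : ℝ, (U (s + δ * Complex.I)).re * PK 1 (s - 0) =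
      (Real.pi * U ((0 : ℝ) + (δ + 1 : ℝ) * Complex.I)).re := by
    rw [← hP]
    have := integral_re hI
    simp only [RCLike.re_to_complex, Complex.re_mul_ofReal] at this
    exact this
  have hIre : Integrable (fun s : ℝ => (U (s + δ * Complex.I)).re * PK 1 (s - 0)) := by
    have := hI.re
    simpa only [RCLike.re_to_complex, Complex.re_mul_ofReal] using this
  have hpos : ∀ s : ℝ, 0 ≤ (U (s + δ * Complex.I)).re * PK 1 (s - 0) := fun s =>
    mul_nonneg (h0 _ (by simpa using hδ)) (PK_pos one_pos _).le
  calc ∫⁻ s : ℝ, ENNReal.ofReal (U (s + δ * Complex.I)).re ∂μI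
      ≤ ∫⁻ s : ℝ, ENNReal.ofReal (2 * ((U (s + δ * Complex.I)).re * PK 1 (s - 0))) ∂μI := by
        unfold μI
        refine setLIntegral_mono' measurableSet_Ioo fun s hs => ?_
        apply ENNReal.ofReal_le_ofReal
        have h1 := h0 (s + δ * Complex.I) (by simpa using hδ)
        have h2 : 1 / 2 ≤ PK 1 (s - 0) := by
          unfold PK
          rw [div_le_div_iff₀ (by norm_num) (by positivity)]
          nlinarith [hs.1, hs.2]
        nlinarith
    _ ≤ ∫⁻ s : ℝ, ENNReal.ofReal (2 * ((U (s + δ * Complex.I)).re * PK 1 (s - 0))) := by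
        unfold μI; exact setLIntegral_le_lintegral _ _
    _ = ENNReal.ofReal (2 * (Real.pi * U ((0 : ℝ) + (δ + 1 : ℝ) * Complex.I)).re) := by
        rw [← ofReal_integral_eq_lintegral_ofReal (hIre.const_mul _)
          (Eventually.of_forall fun s => mul_nonneg (by norm_num) (hpos s)), integral_const_mul, hre]
    _ ≤ _ := by
        apply ENNReal.ofReal_le_ofReal
        gcongr
        rw [Complex.re_ofReal_mul]
        have := Real.pi_pos
        gcongr
        exact (le_abs_self _).trans (Complex.abs_re_le_norm _)

lemma K_sq_le {w : ℂ} (hw : 0 ≤ w.im) : 1 + ‖w‖ ^ 2 ≤ ‖1 - Complex.I * w‖ ^ 2 := by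
  rw [← Complex.normSq_eq_norm_sq, ← Complex.normSq_eq_norm_sq]
  simp [Complex.normSq_apply]
  nlinarith

theorem kolmogorov_log {r : ℝ → ℝ} (hr : Integrable r μI) (h0 : ∀ s, 0 ≤ r s) {δ : ℝ} (hδ : 0 < δ) :
    ∫⁻ x : ℝ, ENNReal.ofReal (Real.log (1 + ‖CT (fun s => (r s : ℂ)) (x + δ * Complex.I)‖ ^ 2)) ∂μI
      ≤ ENNReal.ofReal (4 * ∫ s, r s ∂μI) := by
  set F := CT (fun s => (r s : ℂ)) with hF
  have hrc : Integrable (fun s => (r s : ℂ)) μI := hr.ofReal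
  have hn : ∫ s, ‖(r s : ℂ)‖ ∂μI = ∫ s, r s ∂μI := by
    refine integral_congr_ae (Eventually.of_forall fun s => ?_)
    simp [abs_of_nonneg (h0 s)]
  have hr0 : 0 ≤ ∫ s, r s ∂μI := integral_nonneg h0
  have him : ∀ z : ℂ, 0 < z.im → 0 ≤ (F z).im := fun z hz => CT_im_nonneg hr h0 hz
  have hre1 : ∀ z : ℂ, 0 < z.im → 1 ≤ (1 - Complex.I * F z).re := by
    intro z hz; simp; exact him z hz
  have hnorm1 : ∀ z : ℂ, 0 < z.im → 1 ≤ ‖1 - Complex.I * F z‖ := fun z hz =>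
    (hre1 z hz).trans ((le_abs_self _).trans (Complex.abs_re_le_norm _))
  set U : ℂ → ℂ := fun z => Complex.log (1 - Complex.I * F z) with hU
  have hUd : DifferentiableOn ℂ U {z | 0 < z.im} := by
    refine DifferentiableOn.clog ?_ ?_
    · exact (differentiableOn_const _).sub ((CT_diff hrc).const_mul _)
    · intro z hz; left; linarith [hre1 z hz]
  have hUre : ∀ z, (U z).re = Real.log ‖1 - Complex.I * F z‖ := fun z => Complex.log_re _
  have hU0 : ∀ z : ℂ, 0 < z.im → 0 ≤ (U z).re := fun z hz => by
    rw [hUre]; exact Real.log_nonneg (hnorm1 z hz)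
  have hFle : ∀ z : ℂ, 0 < z.im → Real.log ‖1 - Complex.I * F z‖ ≤ Real.pi⁻¹ * (|z.im|⁻¹ * ∫ s, r s ∂μI) := by
    intro z hz
    refine (Real.log_le_sub_one_of_pos (by linarith [hnorm1 z hz])).trans ?_
    have h1 := CT_norm_le hrc hz.ne'
    rw [hn] at h1
    have h2 : ‖1 - Complex.I * F z‖ ≤ 1 + ‖F z‖ := by
      refine (norm_sub_le _ _).trans ?_
      simp
    linarith
  have hUle : ∀ z : ℂ, δ ≤ z.im → ‖U z‖ ≤ Real.pi⁻¹ * (δ⁻¹ * ∫ s, r s ∂μI) + Real.pi := by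
    intro z hz
    have hz0 : 0 < z.im := lt_of_lt_of_le hδ hz
    refine (Complex.norm_le_abs_re_add_abs_im _).trans ?_
    have h1 : |(U z).im| ≤ Real.pi := by
      rw [hU]; simp only [Complex.log_im]; exact Complex.abs_arg_le_pi _
    have h2 : |(U z).re| ≤ Real.pi⁻¹ * (δ⁻¹ * ∫ s, r s ∂μI) := by
      rw [abs_of_nonneg (hU0 z hz0), hUre]
      refine (hFle z hz0).trans ?_
      rw [abs_of_pos hz0]
      have := Real.pi_pos
      gcongr
    linarith
  -- use the real part at height 1 + δ, through the Poisson representation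
  have hP := poisson_rep hδ hUd hUle 0 one_pos
  have hkey : ∀ z : ℂ, 0 < z.im → Real.log (1 + ‖F z‖ ^ 2) ≤ 2 * (U z).re := by
    intro z hz
    rw [hUre, ← Real.log_rpow (by linarith [hnorm1 z hz])]
    apply Real.log_le_log (by positivity)
    have := K_sq_le (him z hz)
    exact_mod_cast this
  have hUcont : Continuous (fun s : ℝ => U (s + δ * Complex.I)) := by
    refine hUd.continuousOn.comp_continuous (by fun_prop) (fun s => by simpa using hδ)
  have hI : Integrable (fun s : ℝ => U (s + δ * Complex.I) * (PK 1 (s - 0) : ℂ)) :=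
    PK_mul_integrable one_pos 0 hUcont (fun s => hUle _ (by simp))
  have hre : ∫ s : ℝ, (U (s + δ * Complex.I)).re * PK 1 (s - 0) =
      (Real.pi * U ((0 : ℝ) + (δ + 1 : ℝ) * Complex.I)).re := by
    rw [← hP]
    have := integral_re hI
    simp only [RCLike.re_to_complex, Complex.re_mul_ofReal] at this
    exact this
  have hIre : Integrable (fun s : ℝ => (U (s + δ * Complex.I)).re * PK 1 (s - 0)) := by
    have := hI.re
    simpa only [RCLike.re_to_complex, Complex.re_mul_ofReal] using this
  have hpos : ∀ s : ℝ, 0 ≤ (U (s + δ * Complex.I)).re * PK 1 (s - 0) := fun s =>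
    mul_nonneg (hU0 _ (by simpa using hδ)) (PK_pos one_pos _).le
  calc ∫⁻ x : ℝ, ENNReal.ofReal (Real.log (1 + ‖F (x + δ * Complex.I)‖ ^ 2)) ∂μI
      ≤ ∫⁻ s : ℝ, ENNReal.ofReal (4 * ((U (s + δ * Complex.I)).re * PK 1 (s - 0))) ∂μI := by
        unfold μI
        refine setLIntegral_mono' measurableSet_Ioo fun s hs => ?_
        apply ENNReal.ofReal_le_ofReal
        have h1 := hU0 (s + δ * Complex.I) (by simpa using hδ)
        have h3 := hkey (s + δ * Complex.I) (by simpa using hδ)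
        have h2 : 1 / 2 ≤ PK 1 (s - 0) := by
          unfold PK
          rw [div_le_div_iff₀ (by norm_num) (by positivity)]
          nlinarith [hs.1, hs.2]
        nlinarith
    _ ≤ ∫⁻ s : ℝ, ENNReal.ofReal (4 * ((U (s + δ * Complex.I)).re * PK 1 (s - 0))) := by
        unfold μI; exact setLIntegral_le_lintegral _ _
    _ = ENNReal.ofReal (4 * (Real.pi * U ((0 : ℝ) + (δ + 1 : ℝ) * Complex.I)).re) := by
        rw [← ofReal_integral_eq_lintegral_ofReal (hIre.const_mul _)
          (Eventually.of_forall fun s => mul_nonneg (by norm_num) (hpos s)), integral_const_mul, hre]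
    _ ≤ _ := by
        apply ENNReal.ofReal_le_ofReal
        gcongr
        rw [Complex.re_ofReal_mul, hUre]
        have hpi := Real.pi_pos
        have h4 : (0 : ℝ) < ((0 : ℝ) + (δ + 1 : ℝ) * Complex.I : ℂ).im := by simp; linarith
        have := hFle _ h4
        calc _ ≤ Real.pi * (Real.pi⁻¹ * (|((0 : ℝ) + (δ + 1 : ℝ) * Complex.I : ℂ).im|⁻¹ * ∫ s, r s ∂μI)) := by gcongr
          _ = (δ + 1)⁻¹ * ∫ s, r s ∂μI := by
            rw [← mul_assoc, mul_inv_cancel₀ hpi.ne', one_mul]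
            congr 2
            simp
            linarith
          _ ≤ 1 * ∫ s, r s ∂μI := by
            gcongr
            apply inv_le_one_of_one_le₀; linarith
          _ = _ := one_mul _

def C1 : ℝ := 2 * (Real.pi * Real.exp 1) * (Real.cos 1)⁻¹

lemma cos1_pos : 0 < Real.cos 1 := Real.cos_one_pos

lemma C1_pos : 0 < C1 := by
  have := cos1_pos
  have := Real.pi_pos
  unfold C1; positivity

lemma bdd_int {f : ℝ → ℂ} (hf : AEStronglyMeasurable f μI) {M : ℝ} (h1 : ∀ s, ‖f s‖ ≤ M) :
    Integrable f μI := Integrable.of_bound hf M (Eventually.of_forall h1)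

lemma CT_bdd_le {f : ℝ → ℂ} (hf : AEStronglyMeasurable f μI) (h1 : ∀ s, ‖f s‖ ≤ 1) {z : ℂ} (hz : z.im ≠ 0) :
    ‖CT f z‖ ≤ |z.im|⁻¹ := by
  refine (CT_norm_le (bdd_int hf h1) hz).trans ?_
  have h2 : ∫ s, ‖f s‖ ∂μI ≤ 2 := by
    have := integral_mono (bdd_int hf h1).norm (integrable_const (μ := μI) (1:ℝ)) h1
    simpa [muI_real_univ] using this
  have h3 : Real.pi⁻¹ * 2 ≤ 1 := by
    rw [inv_mul_le_iff₀ Real.pi_pos]; linarith [Real.pi_gt_three]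
  have h0 : 0 ≤ |z.im|⁻¹ := by positivity
  calc Real.pi⁻¹ * (|z.im|⁻¹ * ∫ s, ‖f s‖ ∂μI) ≤ Real.pi⁻¹ * (|z.im|⁻¹ * 2) := by
        have := Real.pi_pos
        gcongr
    _ = |z.im|⁻¹ * (Real.pi⁻¹ * 2) := by ring
    _ ≤ |z.im|⁻¹ * 1 := by gcongr
    _ = _ := by ring

lemma exp_re_bound {θ : ℝ → ℝ} (hθ : AEStronglyMeasurable θ μI) (h1 : ∀ s, |θ s| ≤ 1) {δ : ℝ} (hδ : 0 < δ) :
    ∫⁻ x : ℝ, ENNReal.ofReal (Real.exp (CT (fun s => (θ s : ℂ)) (x + δ * Complex.I)).re) ∂μI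
      ≤ ENNReal.ofReal C1 := by
  set F := CT (fun s => (θ s : ℂ)) with hF
  have hm : AEStronglyMeasurable (fun s => (θ s : ℂ)) μI := Complex.continuous_ofReal.comp_aestronglyMeasurable hθ
  have h1c : ∀ s, ‖(θ s : ℂ)‖ ≤ 1 := by simpa using h1
  have hi : Integrable θ μI := Integrable.of_bound hθ 1 (Eventually.of_forall h1)
  have hn : ∀ z : ℂ, z.im ≠ 0 → ‖F z‖ ≤ |z.im|⁻¹ := fun z hz => CT_bdd_le hm h1c hz
  have him : ∀ z : ℂ, 0 < z.im → |(F z).im| ≤ 1 := fun z hz => CT_im_abs_le hi h1 hz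
  set U : ℂ → ℂ := fun z => Complex.exp (F z) with hU
  have hre : ∀ z : ℂ, 0 < z.im → Real.exp (F z).re * Real.cos 1 ≤ (U z).re := by
    intro z hz
    rw [hU]; simp only [Complex.exp_re]
    gcongr
    rw [← Real.cos_abs (F z).im]
    exact Real.cos_le_cos_of_nonneg_of_le_pi (abs_nonneg _) (by linarith [Real.pi_gt_three]) (him z hz)
  have hUn : ∀ z, ‖U z‖ ≤ Real.exp ‖F z‖ := by
    intro z
    rw [hU]; simp only [Complex.norm_exp]
    exact Real.exp_le_exp.2 (Complex.re_le_norm _)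
  have hd : DifferentiableOn ℂ U {z | 0 < z.im} := (CT_diff hi.ofReal).cexp
  have hc := cos1_pos
  have hP := poisson_re_bound (M := Real.exp δ⁻¹) hδ hd (fun z hz => by
    refine (hUn z).trans (Real.exp_le_exp.2 ?_)
    have hz0 : 0 < z.im := lt_of_lt_of_le hδ hz
    refine (hn z hz0.ne').trans ?_
    rw [abs_of_pos hz0]; gcongr) (fun z hz => le_trans (by positivity) (hre z hz))
  have hone : ‖U ((0 : ℝ) + (δ + 1 : ℝ) * Complex.I)‖ ≤ Real.exp 1 := by
    refine (hUn _).trans (Real.exp_le_exp.2 ?_)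
    have hz : ((0 : ℝ) + (δ + 1 : ℝ) * Complex.I : ℂ).im = δ + 1 := by simp
    refine (hn _ (by rw [hz]; positivity)).trans ?_
    rw [hz, abs_of_pos (by positivity)]
    exact inv_le_one_of_one_le₀ (by linarith)
  have hpi := Real.pi_pos
  calc _ ≤ ∫⁻ s : ℝ, ENNReal.ofReal (Real.cos 1)⁻¹ * ENNReal.ofReal (U (s + δ * Complex.I)).re ∂μI := by
        refine lintegral_mono fun s => ?_
        simp only
        rw [← ENNReal.ofReal_mul (by positivity)]
        apply ENNReal.ofReal_le_ofReal
        have := hre (s + δ * Complex.I) (by simpa using hδ)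
        rw [← div_eq_inv_mul, le_div_iff₀ hc]; exact this
    _ = ENNReal.ofReal (Real.cos 1)⁻¹ * ∫⁻ s : ℝ, ENNReal.ofReal (U (s + δ * Complex.I)).re ∂μI :=
        lintegral_const_mul' _ _ ENNReal.ofReal_ne_top
    _ ≤ ENNReal.ofReal (Real.cos 1)⁻¹ * ENNReal.ofReal (2 * (Real.pi * Real.exp 1)) := by
        gcongr
        refine hP.trans ?_
        gcongr
    _ = _ := by
        rw [← ENNReal.ofReal_mul (by positivity)]; unfold C1; congr 1; ring

def C0 : ℝ := 4 * (Real.exp 1 * C1)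
lemma C0_pos : 0 < C0 := by have := C1_pos; unfold C0; positivity

lemma CT_cont {f : ℝ → ℂ} (hf : Integrable f μI) {δ : ℝ} (hδ : δ ≠ 0) :
    Continuous (fun x : ℝ => CT f (x + δ * Complex.I)) := by
  rcases lt_or_gt_of_ne hδ with h | h
  · have e : (fun x : ℝ => CT f (x + δ * Complex.I)) = fun x : ℝ => (starRingEnd ℂ)
        (CT (fun s => (starRingEnd ℂ) (f s)) (x + (-δ : ℝ) * Complex.I)) := by
      funext x
      rw [← CT_conj]
      simp
    rw [e]
    refine Complex.continuous_conj.comp ?_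
    have hc : Integrable (fun s => (starRingEnd ℂ) (f s)) μI := by
      refine hf.mono (Complex.continuous_conj.comp_aestronglyMeasurable hf.1) (Eventually.of_forall fun s => by simp)
    exact (CT_diff hc).continuousOn.comp_continuous (by fun_prop) (fun x => by simpa using h)
  · exact (CT_diff hf).continuousOn.comp_continuous (by fun_prop) (fun x => by simpa using h)

lemma exp_bound_pos {θ : ℝ → ℂ} (hθ : AEStronglyMeasurable θ μI) (h1 : ∀ s, ‖θ s‖ ≤ 1) {δ : ℝ} (hδ : 0 < δ) :
    ∫⁻ x : ℝ, ENNReal.ofReal (Real.exp (‖CT θ (x + δ * Complex.I)‖ / 2)) ∂μI ≤ ENNReal.ofReal C0 := by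
  have hre : AEStronglyMeasurable (fun s => (θ s).re) μI := Complex.continuous_re.comp_aestronglyMeasurable hθ
  have him : AEStronglyMeasurable (fun s => (θ s).im) μI := Complex.continuous_im.comp_aestronglyMeasurable hθ
  have hre1 : ∀ s, |(θ s).re| ≤ 1 := fun s => (Complex.abs_re_le_norm _).trans (h1 s)
  have him1 : ∀ s, |(θ s).im| ≤ 1 := fun s => (Complex.abs_im_le_norm _).trans (h1 s)
  have hrei : Integrable (fun s => (θ s).re) μI := Integrable.of_bound hre 1 (Eventually.of_forall hre1)
  have himi : Integrable (fun s => (θ s).im) μI := Integrable.of_bound him 1 (Eventually.of_forall him1)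
  set A := CT (fun s => ((θ s).re : ℂ)) with hA
  set B := CT (fun s => ((θ s).im : ℂ)) with hB
  have e : ∀ z : ℂ, 0 < z.im → CT θ z = A z + Complex.I * B z := by
    intro z hz
    rw [hA, hB, ← CT_smul, ← CT_add (f := fun s => ((θ s).re : ℂ)) (g := fun s => Complex.I * ((θ s).im : ℂ)) hrei.ofReal (himi.ofReal.const_mul _) hz.ne']
    congr 1; funext s
    conv_lhs => rw [← Complex.re_add_im (θ s)]
    ring
  have hA1 := exp_re_bound hre hre1 hδ
  have hB1 := exp_re_bound him him1 hδ
  have hA2 := exp_re_bound hre.neg (fun s => by simpa using hre1 s) hδ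
  have hB2 := exp_re_bound him.neg (fun s => by simpa using him1 s) hδ
  simp only [Pi.neg_apply, Complex.ofReal_neg, CT_neg, Complex.neg_re] at hA2 hB2
  have cA := CT_cont (hrei.ofReal (𝕜 := ℂ)) hδ.ne'
  have cB := CT_cont (himi.ofReal (𝕜 := ℂ)) hδ.ne'
  have key : ∀ x : ℝ, ENNReal.ofReal (Real.exp (‖CT θ (x + δ * Complex.I)‖ / 2)) ≤
      ENNReal.ofReal (Real.exp 1) * (ENNReal.ofReal (Real.exp (A (x + δ * Complex.I)).re) +
        ENNReal.ofReal (Real.exp (-(A (x + δ * Complex.I)).re)) +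
        ENNReal.ofReal (Real.exp (B (x + δ * Complex.I)).re) +
        ENNReal.ofReal (Real.exp (-(B (x + δ * Complex.I)).re))) := by
    intro x
    have hz : 0 < (x + δ * Complex.I : ℂ).im := by simpa using hδ
    rw [e _ hz]
    generalize (x + δ * Complex.I : ℂ) = z at hz
    have a1 : |(A z).im| ≤ 1 := CT_im_abs_le hrei hre1 hz
    have b1 : |(B z).im| ≤ 1 := CT_im_abs_le himi him1 hz
    rw [← ENNReal.ofReal_add (by positivity) (by positivity), ← ENNReal.ofReal_add (by positivity) (by positivity),
      ← ENNReal.ofReal_add (by positivity) (by positivity), ← ENNReal.ofReal_mul (by positivity)]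
    apply ENNReal.ofReal_le_ofReal
    have n1 : ‖A z + Complex.I * B z‖ / 2 ≤ 1 + max |(A z).re| |(B z).re| := by
      have q1 := Complex.norm_le_abs_re_add_abs_im (A z)
      have q2 := Complex.norm_le_abs_re_add_abs_im (B z)
      have q3 := norm_add_le (A z) (Complex.I * B z)
      have q4 : ‖Complex.I * B z‖ = ‖B z‖ := by simp
      have q5 := le_max_left |(A z).re| |(B z).re|
      have q6 := le_max_right |(A z).re| |(B z).re|
      linarith
    refine (Real.exp_le_exp.2 n1).trans ?_
    rw [Real.exp_add]
    gcongr
    have p1 := Real.exp_pos (A z).re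
    have p2 := Real.exp_pos (-(A z).re)
    have p3 := Real.exp_pos (B z).re
    have p4 := Real.exp_pos (-(B z).re)
    rcases max_choice |(A z).re| |(B z).re| with h | h <;> rw [h]
    · rcases abs_choice (A z).re with h | h <;> rw [h] <;> linarith
    · rcases abs_choice (B z).re with h | h <;> rw [h] <;> linarith
  refine (lintegral_mono key).trans ?_
  rw [lintegral_const_mul' _ _ ENNReal.ofReal_ne_top]
  have mA : Measurable fun x : ℝ => ENNReal.ofReal (Real.exp (A (x + δ * Complex.I)).re) :=
    (ENNReal.continuous_ofReal.comp (Real.continuous_exp.comp (Complex.continuous_re.comp cA))).measurable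
  have mA' : Measurable fun x : ℝ => ENNReal.ofReal (Real.exp (-(A (x + δ * Complex.I)).re)) :=
    (ENNReal.continuous_ofReal.comp (Real.continuous_exp.comp (Complex.continuous_re.comp cA).neg)).measurable
  have mB : Measurable fun x : ℝ => ENNReal.ofReal (Real.exp (B (x + δ * Complex.I)).re) :=
    (ENNReal.continuous_ofReal.comp (Real.continuous_exp.comp (Complex.continuous_re.comp cB))).measurable
  have mB' : Measurable fun x : ℝ => ENNReal.ofReal (Real.exp (-(B (x + δ * Complex.I)).re)) :=
    (ENNReal.continuous_ofReal.comp (Real.continuous_exp.comp (Complex.continuous_re.comp cB).neg)).measurable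
  rw [lintegral_add_right _ mB', lintegral_add_right _ mB, lintegral_add_right _ mA']
  have hC := C1_pos
  calc _ ≤ ENNReal.ofReal (Real.exp 1) * (ENNReal.ofReal C1 + ENNReal.ofReal C1 + ENNReal.ofReal C1 + ENNReal.ofReal C1) := by
        gcongr
    _ = _ := by
        rw [← ENNReal.ofReal_add (by positivity) (by positivity), ← ENNReal.ofReal_add (by positivity) (by positivity),
          ← ENNReal.ofReal_add (by positivity) (by positivity), ← ENNReal.ofReal_mul (by positivity)]
        unfold C0; congr 1; ring

lemma exp_bound {θ : ℝ → ℂ} (hθ : AEStronglyMeasurable θ μI) (h1 : ∀ s, ‖θ s‖ ≤ 1) {δ : ℝ} (hδ : δ ≠ 0) :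
    ∫⁻ x : ℝ, ENNReal.ofReal (Real.exp (‖CT θ (x + δ * Complex.I)‖ / 2)) ∂μI ≤ ENNReal.ofReal C0 := by
  rcases lt_or_gt_of_ne hδ with h | h
  · have := exp_bound_pos (θ := fun s => (starRingEnd ℂ) (θ s)) (Complex.continuous_conj.comp_aestronglyMeasurable hθ)
      (fun s => by simpa using h1 s) (neg_pos.2 h)
    refine le_of_eq_of_le ?_ this
    refine lintegral_congr fun x => ?_
    congr 3
    have e : (x + δ * Complex.I : ℂ) = (starRingEnd ℂ) (x + (-δ : ℝ) * Complex.I : ℂ) := by simp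
    have e2 : CT θ = CT (fun s => (starRingEnd ℂ) ((starRingEnd ℂ) (θ s))) := by simp
    rw [e, e2, CT_conj]
    simp
  · exact exp_bound_pos hθ h1 h

def dn (n : ℕ) : ℝ := 1 / ((n : ℝ) + 1)
lemma dn_pos (n : ℕ) : 0 < dn n := by unfold dn; positivity
lemma dn_tendsto0 : Tendsto dn atTop (𝓝 0) := tendsto_one_div_add_atTop_nhds_zero_nat
lemma dn_tendsto : Tendsto dn atTop (𝓝[>] 0) :=
  tendsto_nhdsWithin_iff.2 ⟨dn_tendsto0, Eventually.of_forall dn_pos⟩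

lemma kolm_meas {r : ℝ → ℝ} (hr : Integrable r μI) {δ : ℝ} (hδ : δ ≠ 0) :
    Measurable fun x : ℝ => ENNReal.ofReal (Real.log (1 + ‖CT (fun s => (r s : ℂ)) (x + δ * Complex.I)‖ ^ 2)) := by
  have c := CT_cont (hr.ofReal (𝕜 := ℂ)) hδ
  exact ENNReal.measurable_ofReal.comp (Real.measurable_log.comp (by
    exact ((c.norm.pow 2).const_add 1).measurable))

lemma bv_nonneg {r : ℝ → ℝ} (hr : Integrable r μI) (h0 : ∀ s, 0 ≤ r s) :
    ∀ᵐ x : ℝ ∂μI, ∃ l, Tendsto (fun ε : ℝ => CT (fun s => (r s : ℂ)) (x + ε * Complex.I)) (𝓝[>] 0) (𝓝 l) := by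
  set F := CT (fun s => (r s : ℂ)) with hF
  have him : ∀ z : ℂ, 0 < z.im → 0 ≤ (F z).im := fun z hz => CT_im_nonneg hr h0 hz
  have hnorm1 : ∀ z : ℂ, 0 < z.im → 1 ≤ ‖F z + Complex.I‖ := fun z hz => by
    have := Complex.abs_im_le_norm (F z + Complex.I)
    simp only [Complex.add_im, Complex.I_im] at this
    linarith [le_abs_self ((F z).im + 1), him z hz]
  have hne : ∀ z : ℂ, 0 < z.im → F z + Complex.I ≠ 0 := fun z hz h => by
    have := hnorm1 z hz
    rw [h, norm_zero] at this; linarith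
  have hU : DifferentiableOn ℂ (fun z => (F z + Complex.I)⁻¹) {z | 0 < z.im} :=
    ((CT_diff hr.ofReal).add_const _).inv hne
  have hfat := fatou_bounded (M := 1) hU (fun z hz => by
    rw [norm_inv]; exact inv_le_one_of_one_le₀ (hnorm1 z hz))
  have hfat' : ∀ᵐ x : ℝ ∂μI, ∃ l, Tendsto (fun ε : ℝ => (F (x + ε * Complex.I) + Complex.I)⁻¹) (𝓝[>] 0) (𝓝 l) :=
    ae_restrict_of_ae hfat
  have hlim : ∀ᵐ x : ℝ ∂μI, liminf (fun n => ENNReal.ofReal (Real.log (1 + ‖F (x + dn n * Complex.I)‖ ^ 2))) atTop < ⊤ := by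
    apply ae_lt_top
    · exact Measurable.liminf fun n => kolm_meas hr (dn_pos n).ne'
    · refine ne_top_of_le_ne_top ENNReal.ofReal_ne_top ((lintegral_liminf_le fun n => kolm_meas hr (dn_pos n).ne').trans
        (b := _) (c := ENNReal.ofReal (4 * ∫ s, r s ∂μI)) ?_)
      refine (liminf_le_liminf (Eventually.of_forall fun n => kolmogorov_log hr h0 (dn_pos n))).trans ?_
      simp
  filter_upwards [hfat', hlim] with x ⟨q, hq⟩ hx
  by_cases hq0 : q = 0
  · exfalso
    subst hq0
    apply hx.ne
    have h1 : Tendsto (fun n => (F (x + dn n * Complex.I) + Complex.I)⁻¹) atTop (𝓝[≠] 0) := by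
      refine tendsto_nhdsWithin_iff.2 ⟨hq.comp dn_tendsto, Eventually.of_forall fun n => ?_⟩
      exact inv_ne_zero (hne _ (by simpa using dn_pos n))
    have h2 := (tendsto_norm_cobounded_atTop.comp (tendsto_inv₀_nhdsNE_zero.comp h1))
    simp only [Function.comp_def, inv_inv] at h2
    have h3 : Tendsto (fun n => ‖F (x + dn n * Complex.I)‖) atTop atTop := by
      refine tendsto_atTop_mono (fun n => ?_) (tendsto_atTop_add_const_right _ (-1) h2)
      have := norm_add_le (F (x + dn n * Complex.I)) Complex.I
      simp only [Complex.norm_I] at this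
      linarith
    have h4 : Tendsto (fun n => Real.log (1 + ‖F (x + dn n * Complex.I)‖ ^ 2)) atTop atTop :=
      Real.tendsto_log_atTop.comp (tendsto_atTop_add_const_left _ 1 ((tendsto_pow_atTop two_ne_zero).comp h3))
    exact (ENNReal.tendsto_ofReal_atTop.comp h4).liminf_eq
  · refine ⟨q⁻¹ - Complex.I, ?_⟩
    have := (hq.inv₀ hq0).sub_const Complex.I
    simpa using this

lemma kolm_lim {r : ℝ → ℝ} (hr : Integrable r μI) (h0 : ∀ s, 0 ≤ r s) {l : ℝ → ℂ}
    (hl : ∀ᵐ x : ℝ ∂μI, Tendsto (fun ε : ℝ => CT (fun s => (r s : ℂ)) (x + ε * Complex.I)) (𝓝[>] 0) (𝓝 (l x))) :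
    ∫⁻ x : ℝ, ENNReal.ofReal (Real.log (1 + ‖l x‖ ^ 2)) ∂μI ≤ ENNReal.ofReal (4 * ∫ s, r s ∂μI) := by
  have h1 := lintegral_liminf_le (μ := μI) (u := atTop) fun n : ℕ => kolm_meas hr (dn_pos n).ne'
  refine le_trans ?_ (h1.trans ?_)
  · refine le_of_eq (lintegral_congr_ae ?_)
    filter_upwards [hl] with x hx
    have h2 := ((((hx.comp dn_tendsto).norm.pow 2).const_add 1).log (by positivity))
    exact ((ENNReal.continuous_ofReal.tendsto _).comp h2).liminf_eq.symm
  · refine (liminf_le_liminf (Eventually.of_forall fun n => kolmogorov_log hr h0 (dn_pos n))).trans ?_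
    simp

/-- the four nonnegative parts -/
def prt (i : Fin 4) (w : ℂ) : ℝ := match i with
  | 0 => max w.re 0
  | 1 => max (-w.re) 0
  | 2 => max w.im 0
  | 3 => max (-w.im) 0

lemma prt_nonneg (i : Fin 4) (w : ℂ) : 0 ≤ prt i w := by
  fin_cases i <;> simp [prt]

lemma prt_le (i : Fin 4) (w : ℂ) : prt i w ≤ ‖w‖ := by
  have h1 := Complex.abs_re_le_norm w
  have h2 := Complex.abs_im_le_norm w
  have := norm_nonneg w
  fin_cases i <;> simp [prt] <;> linarith [le_abs_self w.re, neg_le_abs w.re, le_abs_self w.im, neg_le_abs w.im]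

lemma prt_cont (i : Fin 4) : Continuous (prt i) := by
  fin_cases i
  · show Continuous fun w : ℂ => max w.re 0
    fun_prop
  · show Continuous fun w : ℂ => max (-w.re) 0
    fun_prop
  · show Continuous fun w : ℂ => max w.im 0
    fun_prop
  · show Continuous fun w : ℂ => max (-w.im) 0
    fun_prop

lemma prt_int {f : ℝ → ℂ} (hf : Integrable f μI) (i : Fin 4) : Integrable (fun s => prt i (f s)) μI := by
  refine hf.mono ((prt_cont i).comp_aestronglyMeasurable hf.1) (Eventually.of_forall fun s => ?_)
  rw [Real.norm_of_nonneg (prt_nonneg _ _)]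
  exact prt_le _ _

lemma prt_eq (w : ℂ) : w = (prt 0 w - prt 1 w : ℂ) + Complex.I * (prt 2 w - prt 3 w : ℂ) := by
  have h : ∀ a : ℝ, max a 0 - max (-a) 0 = a := fun a => by
    rcases le_total a 0 with h | h
    · rw [max_eq_right h, max_eq_left (by linarith)]; ring
    · rw [max_eq_left h, max_eq_right (by linarith)]; ring
  apply Complex.ext <;> simp [prt, h]

lemma CT_prt {f : ℝ → ℂ} (hf : Integrable f μI) {z : ℂ} (hz : z.im ≠ 0) :
    CT f z = (CT (fun s => (prt 0 (f s) : ℂ)) z - CT (fun s => (prt 1 (f s) : ℂ)) z) +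
      Complex.I * (CT (fun s => (prt 2 (f s) : ℂ)) z - CT (fun s => (prt 3 (f s) : ℂ)) z) := by
  have hi : ∀ i, Integrable (fun s => (prt i (f s) : ℂ)) μI := fun i => (prt_int hf i).ofReal
  rw [← CT_sub (hi 0) (hi 1) hz, ← CT_sub (hi 2) (hi 3) hz, ← CT_smul,
    ← CT_add (f := fun s => (prt 0 (f s) : ℂ) - prt 1 (f s))
      (g := fun s => Complex.I * ((prt 2 (f s) : ℂ) - prt 3 (f s)))
      ((hi 0).sub (hi 1)) (((hi 2).sub (hi 3)).const_mul _) hz]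
  congr 1; funext s; exact prt_eq (f s)

lemma bv_exists {f : ℝ → ℂ} (hf : Integrable f μI) :
    ∀ᵐ x : ℝ ∂μI, ∃ l, Tendsto (fun ε : ℝ => CT f (x + ε * Complex.I)) (𝓝[>] 0) (𝓝 l) := by
  have h : ∀ i, ∀ᵐ x : ℝ ∂μI, ∃ l, Tendsto (fun ε : ℝ => CT (fun s => (prt i (f s) : ℂ)) (x + ε * Complex.I)) (𝓝[>] 0) (𝓝 l) :=
    fun i => bv_nonneg (prt_int hf i) (fun s => prt_nonneg _ _)
  filter_upwards [h 0, h 1, h 2, h 3] with x ⟨l0, h0⟩ ⟨l1, h1⟩ ⟨l2, h2⟩ ⟨l3, h3⟩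
  refine ⟨(l0 - l1) + Complex.I * (l2 - l3), ?_⟩
  refine Tendsto.congr' ?_ ((h0.sub h1).add ((h2.sub h3).const_mul Complex.I))
  filter_upwards [self_mem_nhdsWithin] with ε hε
  exact (CT_prt hf (by simpa using (ne_of_gt hε))).symm

/-- truncated transform -/
def Te (f : ℝ → ℂ) (t ε : ℝ) : ℂ := (Real.pi : ℂ)⁻¹ *
      ∫ x in {x : ℝ | x ∈ Set.Ioo (-1 : ℝ) 1 ∧ ε ≤ |x - t|}, f x / ((x : ℂ) - (t : ℂ))

def KK (ε u : ℝ) : ℂ := (if ε ≤ |u| then (u : ℂ)⁻¹ else 0) - ((u : ℂ) - ε * Complex.I)⁻¹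

lemma KK_meas (ε : ℝ) : Measurable (KK ε) := by
  unfold KK
  refine Measurable.sub (Measurable.ite (measurableSet_le measurable_const (by fun_prop)) ?_ measurable_const) ?_
  · fun_prop
  · fun_prop

lemma uie_ne {ε : ℝ} (hε : 0 < ε) (u : ℝ) : (u : ℂ) - ε * Complex.I ≠ 0 := by
  intro h
  have := congrArg Complex.im h
  simp at this; exact hε.ne' this

lemma normuie (ε u : ℝ) : ‖(u : ℂ) - ε * Complex.I‖ ^ 2 = u ^ 2 + ε ^ 2 := by
  rw [← Complex.normSq_eq_norm_sq]; simp [Complex.normSq_apply]; ring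

lemma KK_bound {ε : ℝ} (hε : 0 < ε) (u : ℝ) : ‖KK ε u‖ ≤ 2 * PK ε u := by
  have hne := uie_ne hε u
  have hN := normuie ε u
  have hp : 0 < ‖(u : ℂ) - ε * Complex.I‖ := norm_pos_iff.2 hne
  unfold KK PK
  rw [← hN]
  split_ifs with h
  · have hu : (u : ℂ) ≠ 0 := by
      intro h0; have : u = 0 := by exact_mod_cast h0
      rw [this] at h; simp at h; linarith
    have hu' : 0 < |u| := lt_of_lt_of_le hε h
    have e : (u : ℂ)⁻¹ - ((u : ℂ) - ε * Complex.I)⁻¹ = -(ε * Complex.I) / (u * ((u : ℂ) - ε * Complex.I)) := by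
      field_simp; ring
    rw [e]
    simp only [norm_div, norm_neg, norm_mul, Complex.norm_real, Complex.norm_I, Real.norm_eq_abs, abs_of_pos hε, mul_one]
    set N := ‖(u : ℂ) - ε * Complex.I‖
    have h2 : N ≤ 2 * |u| := by
      apply le_of_sq_le_sq _ (by positivity)
      rw [hN, mul_pow, sq_abs]
      have : ε ^ 2 ≤ u ^ 2 := by rw [← sq_abs u]; gcongr
      nlinarith
    rw [← mul_div_assoc, div_le_div_iff₀ (by positivity) (by positivity)]
    have : ε * N * N ≤ ε * N * (2 * |u|) := by gcongr
    nlinarith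
  · push Not at h
    rw [zero_sub, norm_neg, norm_inv]
    set N := ‖(u : ℂ) - ε * Complex.I‖
    have h2 : N ≤ 2 * ε := by
      apply le_of_sq_le_sq _ (by positivity)
      rw [hN]
      have : u ^ 2 ≤ ε ^ 2 := by rw [← sq_abs u]; gcongr
      nlinarith
    rw [← mul_div_assoc, inv_eq_one_div, div_le_div_iff₀ (by positivity) (by positivity)]
    nlinarith

lemma KK_int0 {ε : ℝ} (hε : 0 < ε) : Integrable (KK ε) := by
  have h : Integrable (fun u => 2 * PK ε u) := by
    have := (PK_integrable hε 0).const_mul 2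
    simpa using this
  exact h.mono' (KK_meas ε).aestronglyMeasurable (Eventually.of_forall (KK_bound hε))

lemma KK_integral0 {ε : ℝ} (hε : 0 < ε) : ∫ u, KK ε u = -(Real.pi * Complex.I) := by
  have hP : Integrable (fun u => (PK ε u : ℂ)) := by
    have := (PK_integrable hε 0).ofReal (𝕜 := ℂ)
    simpa using this
  have hPi : ∫ u, (PK ε u : ℂ) = Real.pi := by
    have := PK_integral hε 0
    simp only [sub_zero] at this
    rw [integral_complex_ofReal, this]
  set o : ℝ → ℂ := fun u => KK ε u + Complex.I * PK ε u with ho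
  have hodd : ∀ u, o (-u) = - o u := by
    intro u
    simp only [ho, KK, PK, abs_neg]
    have hne := uie_ne hε u
    have hne2 : (u : ℂ) + ε * Complex.I ≠ 0 := by
      have := uie_ne hε (-u)
      intro h; apply this; push_cast; linear_combination -h
    have hf : ((u:ℂ)^2 + (ε:ℂ)^2) = ((u : ℂ) - ε * Complex.I) * ((u : ℂ) + ε * Complex.I) := by
      ring_nf; simp
    have hne3 : ((u:ℂ)^2 + (ε:ℂ)^2) ≠ 0 := by rw [hf]; exact mul_ne_zero hne hne2
    have q : ∀ v : ℝ, (v:ℂ)^2 + (ε:ℂ)^2 ≠ 0 → ((v : ℂ) - ε * Complex.I)⁻¹ - Complex.I * ((ε / (v^2+ε^2) : ℝ) : ℂ) = v / ((v:ℂ)^2+(ε:ℂ)^2) := by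
      intro v hv
      have hnv := uie_ne hε v
      push_cast
      field_simp
      ring_nf
      simp
    have q1 := q u hne3
    have q2 := q (-u) (by push_cast; rw [neg_sq]; exact hne3)
    push_cast at q1 q2 ⊢
    rw [neg_sq] at q2 ⊢
    split_ifs
    · rw [inv_neg]
      rw [neg_div] at q2
      linear_combination -q1 - q2
    · rw [neg_div] at q2
      linear_combination -q1 - q2
  have ho0 : ∫ u, o u = 0 := by
    have h1 := integral_neg_eq_self o volume
    simp only [hodd] at h1
    rw [integral_neg] at h1
    have h2 : (2:ℂ) * ∫ u, o u = 0 := by linear_combination -h1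
    simpa using h2
  have hadd := integral_add (KK_int0 hε) (hP.const_mul Complex.I)
  have : ∫ u, o u = (∫ u, KK ε u) + Complex.I * Real.pi := by
    rw [← hPi, ← integral_const_mul]; exact hadd
  rw [ho0] at this
  linear_combination -this

lemma compare {f : ℝ → ℂ} (hf : Integrable f μI) {t ε : ℝ} (hε : 0 < ε) (ht : t ∈ Ioo (-1:ℝ) 1) :
    ‖Te f t ε - CT f (t + ε * Complex.I) + Complex.I * f t‖ ≤
      2 * ∫ s, PK ε (s - t) * ‖(Ioo (-1:ℝ) 1).indicator f s - (Ioo (-1:ℝ) 1).indicator f t‖ := by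
  set f0 := (Ioo (-1:ℝ) 1).indicator f with hf0
  have hf0i : Integrable f0 := (integrable_indicator_iff measurableSet_Ioo).2 hf
  have hft : f0 t = f t := indicator_of_mem ht f
  have hKm : AEStronglyMeasurable (fun s => KK ε (s - t)) volume :=
    ((KK_meas ε).comp (measurable_id.sub_const t)).aestronglyMeasurable
  have hPle : ∀ u, PK ε u ≤ ε⁻¹ := fun u => by
    unfold PK
    rw [div_le_iff₀ (by positivity), inv_mul_eq_div, le_div_iff₀ hε]; nlinarith [sq_nonneg u]
  have hKi : Integrable (fun s => KK ε (s - t)) := (KK_int0 hε).comp_sub_right t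
  have hKI : ∫ s, KK ε (s - t) = -(Real.pi * Complex.I) := by
    rw [integral_sub_right_eq_self (KK ε) t]; exact KK_integral0 hε
  have hKf : Integrable (fun s => f0 s * KK ε (s - t)) :=
    hf0i.mul_bdd (c := 2 * ε⁻¹) hKm (Eventually.of_forall fun s => (KK_bound hε _).trans (by linarith [hPle (s - t)]))
  have hS : MeasurableSet {x : ℝ | x ∈ Set.Ioo (-1 : ℝ) 1 ∧ ε ≤ |x - t|} :=
    measurableSet_Ioo.inter (measurableSet_le measurable_const
      (by fun_prop : Measurable fun x : ℝ => |x - t|))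
  -- Te as whole line integral
  set A : ℝ → ℂ := fun s => f0 s * (if ε ≤ |s - t| then ((s - t : ℝ) : ℂ)⁻¹ else 0) with hA
  set B : ℝ → ℂ := fun s => f0 s * (((s - t : ℝ) : ℂ) - ε * Complex.I)⁻¹ with hB
  have hBi : Integrable B := by
    have hm1 : Measurable fun s : ℝ => (((s - t : ℝ) : ℂ) - ε * Complex.I)⁻¹ := by fun_prop
    refine hf0i.mul_bdd (c := ε⁻¹) hm1.aestronglyMeasurable (Eventually.of_forall fun s => ?_)
    rw [norm_inv]
    gcongr
    have := Complex.abs_im_le_norm (((s - t : ℝ) : ℂ) - ε * Complex.I)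
    simpa [abs_of_pos hε] using this
  have hTe : Te f t ε = (Real.pi : ℂ)⁻¹ * ∫ s, A s := by
    unfold Te
    rw [← integral_indicator hS]
    congr 2; funext s
    simp only [indicator, mem_setOf_eq, hA, hf0]
    by_cases h1 : s ∈ Ioo (-1:ℝ) 1 <;> by_cases h2 : ε ≤ |s - t| <;> simp [h1, h2, div_eq_mul_inv]
  have hCT : CT f (t + ε * Complex.I) = (Real.pi : ℂ)⁻¹ * ∫ s, B s := by
    unfold CT μI
    rw [← integral_indicator measurableSet_Ioo]
    congr 2; funext s
    simp only [indicator, hB, hf0]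
    by_cases h1 : s ∈ Ioo (-1:ℝ) 1 <;> simp [h1, div_eq_mul_inv, sub_sub]
  have hAB : ∀ s, f0 s * KK ε (s - t) = A s - B s := fun s => by
    simp only [hA, hB, KK, mul_sub]
  have hAi : Integrable A := by
    have : A = fun s => f0 s * KK ε (s - t) + B s := by funext s; rw [hAB]; ring
    rw [this]; exact hKf.add hBi
  have e1 : Te f t ε - CT f (t + ε * Complex.I) + Complex.I * f t =
      (Real.pi : ℂ)⁻¹ * ∫ s, KK ε (s - t) * (f0 s - f0 t) := by
    have e2 : ∫ s, KK ε (s - t) * (f0 s - f0 t) = (∫ s, A s) - (∫ s, B s) + f t * (Real.pi * Complex.I) := by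
      have e3 : (fun s => KK ε (s - t) * (f0 s - f0 t)) = fun s => (A s - B s) - KK ε (s - t) * f0 t := by
        funext s; rw [← hAB]; ring
      rw [e3, integral_sub (f := fun s => A s - B s) (hAi.sub hBi) (hKi.mul_const _), integral_sub hAi hBi, integral_mul_const, hKI, hft]
      ring
    rw [e2, hTe, hCT]
    have : (Real.pi : ℂ) ≠ 0 := by exact_mod_cast Real.pi_ne_zero
    field_simp
  rw [e1, norm_mul]
  have hpi : ‖(Real.pi : ℂ)⁻¹‖ ≤ 1 := by
    rw [norm_inv, Complex.norm_real, Real.norm_of_nonneg Real.pi_pos.le]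
    exact inv_le_one_of_one_le₀ (by linarith [Real.pi_gt_three])
  have hPi : Integrable (fun s => 2 * (PK ε (s - t) * ‖f0 s - f0 t‖)) := by
    refine Integrable.const_mul ?_ _
    have h1 : Integrable (fun s => PK ε (s - t) * (‖f0 s‖ + ‖f0 t‖)) := by
      simp_rw [mul_add]
      refine Integrable.add ?_ ((PK_integrable hε t).mul_const _)
      exact hf0i.norm.bdd_mul (c := ε⁻¹) ((PK_cont hε).comp (by fun_prop : Continuous fun s : ℝ => s - t)).aestronglyMeasurable
        (Eventually.of_forall fun s => by rw [Real.norm_of_nonneg (PK_pos hε _).le]; exact hPle _)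
    refine h1.mono' ?_ (Eventually.of_forall fun s => ?_)
    · exact ((PK_cont hε).comp (by fun_prop : Continuous fun s : ℝ => s - t)).aestronglyMeasurable.mul
        (hf0i.1.sub aestronglyMeasurable_const).norm
    · rw [norm_mul, Real.norm_of_nonneg (PK_pos hε _).le, norm_norm]
      have := (PK_pos hε (s - t)).le
      gcongr
      exact norm_sub_le _ _
  calc _ ≤ 1 * ‖∫ s, KK ε (s - t) * (f0 s - f0 t)‖ := by gcongr
    _ = ‖∫ s, KK ε (s - t) * (f0 s - f0 t)‖ := one_mul _
    _ ≤ ∫ s, 2 * (PK ε (s - t) * ‖f0 s - f0 t‖) := by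
        refine norm_integral_le_of_norm_le hPi (Eventually.of_forall fun s => ?_)
        rw [norm_mul, ← mul_assoc]
        gcongr
        exact KK_bound hε _
    _ = _ := integral_const_mul _ _

/-- the principal value and upper boundary value exist and agree a.e. -/
theorem bv_upper {f : ℝ → ℂ} (hf : Integrable f μI) :
    ∀ᵐ x : ℝ ∂μI, Tendsto (Te f x) (𝓝[>] 0) (𝓝 (FHT f x)) ∧
      Tendsto (fun ε : ℝ => CT f (x + ε * Complex.I)) (𝓝[>] 0) (𝓝 (FHT f x + Complex.I * f x)) := by
  set f0 := (Ioo (-1:ℝ) 1).indicator f with hf0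
  have hf0i : Integrable f0 := (integrable_indicator_iff measurableSet_Ioo).2 hf
  have hw : Integrable (fun s => ((1+s^2)⁻¹:ℝ) • f0 s) := by
    have hc : Continuous fun s : ℝ => (1 + s^2)⁻¹ := Continuous.inv₀ (by fun_prop) (fun s => by positivity)
    refine hf0i.mono (hc.aestronglyMeasurable.smul hf0i.1) (Eventually.of_forall fun s => ?_)
    rw [norm_smul, Real.norm_of_nonneg (by positivity)]
    have : (1 + s^2)⁻¹ ≤ 1 := inv_le_one_of_one_le₀ (by nlinarith [sq_nonneg s])
    nlinarith [norm_nonneg (f0 s)]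
  have h1 : ∀ᵐ x ∂μI, Tendsto (fun ε => ∫ s, PK ε (s - x) * ‖f0 s - f0 x‖) (𝓝[>] 0) (𝓝 0) :=
    ae_restrict_of_ae (lebesgue_poisson hw)
  have hm : ∀ᵐ x ∂μI, x ∈ Ioo (-1:ℝ) 1 := ae_restrict_mem measurableSet_Ioo
  filter_upwards [h1, hm, bv_exists hf] with x hx hxm ⟨l, hl⟩
  have h2 : Tendsto (fun ε => Te f x ε - CT f (x + ε * Complex.I) + Complex.I * f x) (𝓝[>] 0) (𝓝 0) := by
    refine squeeze_zero_norm' ?_ (by simpa using hx.const_mul 2)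
    filter_upwards [self_mem_nhdsWithin] with ε hε
    exact compare hf hε hxm
  have h3 : Tendsto (Te f x) (𝓝[>] 0) (𝓝 (l - Complex.I * f x)) := by
    have := (h2.add hl).sub_const (Complex.I * f x)
    simp only [zero_add] at this
    refine this.congr fun ε => ?_
    ring
  have h4 : FHT f x = l - Complex.I * f x := h3.limUnder_eq
  rw [h4]
  exact ⟨h3, by simpa using hl⟩

lemma Te_conj (f : ℝ → ℂ) (t ε : ℝ) : Te (fun s => (starRingEnd ℂ) (f s)) t ε = (starRingEnd ℂ) (Te f t ε) := by
  unfold Te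
  rw [map_mul, ← integral_conj]
  simp

lemma conj_int {f : ℝ → ℂ} (hf : Integrable f μI) : Integrable (fun s => (starRingEnd ℂ) (f s)) μI :=
  hf.mono (Complex.continuous_conj.comp_aestronglyMeasurable hf.1) (Eventually.of_forall fun s => by simp)

theorem bv_lower {f : ℝ → ℂ} (hf : Integrable f μI) :
    ∀ᵐ x : ℝ ∂μI, 
      Tendsto (fun ε : ℝ => CT f (x + (-ε : ℝ) * Complex.I)) (𝓝[>] 0) (𝓝 (FHT f x - Complex.I * f x)) := by
  filter_upwards [bv_upper hf, bv_upper (conj_int hf)] with x ⟨h1, _⟩ ⟨h2, h3⟩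
  have e1 : FHT (fun s => (starRingEnd ℂ) (f s)) x = (starRingEnd ℂ) (FHT f x) := by
    refine tendsto_nhds_unique h2 ?_
    have := (Complex.continuous_conj.tendsto _).comp h1
    refine this.congr fun ε => ?_
    simp [Te_conj]
  rw [e1] at h3
  have := (Complex.continuous_conj.tendsto _).comp h3
  simp only [map_add, map_mul, Complex.conj_conj, Complex.conj_I] at this
  rw [neg_mul, ← sub_eq_add_neg] at this
  refine this.congr fun ε => ?_
  simp only [Function.comp]
  rw [← CT_conj]
  simp

lemma FHT_aesm {f : ℝ → ℂ} (hf : Integrable f μI) : AEStronglyMeasurable (FHT f) μI := by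
  refine aestronglyMeasurable_of_tendsto_ae atTop
    (f := fun (n : ℕ) (x : ℝ) => CT f (x + dn n * Complex.I) - Complex.I * f x) (fun n => ?_) ?_
  · exact (CT_cont hf (dn_pos n).ne').aestronglyMeasurable.sub (hf.1.const_mul _)
  · filter_upwards [bv_upper hf] with x hx
    have := (hx.2.comp dn_tendsto).sub_const (Complex.I * f x)
    simpa using this

lemma FHT_sub {f g : ℝ → ℂ} (hf : Integrable f μI) (hg : Integrable g μI) :
    ∀ᵐ x ∂μI, FHT (fun s => f s - g s) x = FHT f x - FHT g x := by
  filter_upwards [bv_upper hf, bv_upper hg, bv_upper (hf.sub hg)] with x ⟨_, h1⟩ ⟨_, h2⟩ ⟨_, h3⟩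
  have h4 := h1.sub h2
  have h5 : Tendsto (fun ε : ℝ => CT f (x + ε * Complex.I) - CT g (x + ε * Complex.I)) (𝓝[>] 0)
    (𝓝 (FHT (f - g) x + Complex.I * (f x - g x))) := by
    refine h3.congr' ?_
    filter_upwards [self_mem_nhdsWithin] with ε hε
    exact CT_sub hf hg (by simpa using (ne_of_gt hε))
  have := tendsto_nhds_unique h4 h5
  have e : FHT (fun s => f s - g s) x = FHT (f - g) x := rfl
  rw [e]
  linear_combination -this

lemma log_to_zero {a : ℕ → ℝ} (ha : ∀ n, 0 ≤ a n) (h : Tendsto (fun n => ENNReal.ofReal (Real.log (1 + a n ^ 2))) atTop (𝓝 0)) :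
    Tendsto a atTop (𝓝 0) := by
  have h1 := (ENNReal.tendsto_toReal ENNReal.zero_ne_top).comp h
  simp only [Function.comp_def, ENNReal.toReal_zero] at h1
  have h2 := (Real.continuous_exp.tendsto _).comp h1
  simp only [Real.exp_zero] at h2
  have h3 : Tendsto (fun n => a n ^ 2) atTop (𝓝 0) := by
    have := h2.sub_const 1
    rw [sub_self] at this
    refine this.congr fun n => ?_
    simp only [Function.comp]
    rw [ENNReal.toReal_ofReal (Real.log_nonneg (by nlinarith [sq_nonneg (a n)])), Real.exp_log (by positivity)]
    ring
  have h4 := (Real.continuous_sqrt.tendsto _).comp h3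
  simp only [Real.sqrt_zero, Function.comp_def] at h4
  refine h4.congr fun n => Real.sqrt_sq (ha n)

lemma FHT_to_zero {h : ℕ → ℝ → ℂ} (hi : ∀ k, Integrable (h k) μI)
    (hs : ∀ k, ∫ s, ‖h k s‖ ∂μI ≤ (1/2 : ℝ) ^ k)
    (h0 : ∀ s, Tendsto (fun k => h k s) atTop (𝓝 0)) :
    ∀ᵐ x ∂μI, Tendsto (fun k => FHT (h k) x) atTop (𝓝 0) := by
  have key : ∀ i, ∀ᵐ x ∂μI, Tendsto (fun k => FHT (fun s => (prt i (h k s) : ℂ)) x + Complex.I * (prt i (h k x) : ℂ)) atTop (𝓝 0) := by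
    intro i
    set l : ℕ → ℝ → ℂ := fun k x => FHT (fun s => (prt i (h k s) : ℂ)) x + Complex.I * (prt i (h k x) : ℂ) with hl
    have hpi : ∀ k, Integrable (fun s => (prt i (h k s) : ℂ)) μI := fun k => (prt_int (hi k) i).ofReal
    have hlm : ∀ k, AEStronglyMeasurable (l k) μI := fun k => (FHT_aesm (hpi k)).add ((hpi k).1.const_mul _)
    have hle : ∀ k, ∫⁻ x, ENNReal.ofReal (Real.log (1 + ‖l k x‖ ^ 2)) ∂μI ≤ ENNReal.ofReal (4 * (1/2) ^ k) := by
      intro k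
      refine (kolm_lim (prt_int (hi k) i) (fun s => prt_nonneg _ _) (l := l k) ?_).trans ?_
      · filter_upwards [bv_upper (hpi k)] with x hx using hx.2
      · apply ENNReal.ofReal_le_ofReal
        have := integral_mono (prt_int (hi k) i) (hi k).norm (fun s => prt_le i _)
        have := hs k
        linarith
    have hm : ∀ k, AEMeasurable (fun x => ENNReal.ofReal (Real.log (1 + ‖l k x‖ ^ 2))) μI := fun k => by
      have h1 : AEMeasurable (fun x => 1 + ‖l k x‖ ^ 2) μI := ((hlm k).norm.aemeasurable.pow_const 2).const_add 1
      exact ENNReal.measurable_ofReal.comp_aemeasurable (Real.measurable_log.comp_aemeasurable h1)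
    have hsum : ∫⁻ x, ∑' k, ENNReal.ofReal (Real.log (1 + ‖l k x‖ ^ 2)) ∂μI ≠ ⊤ := by
      rw [lintegral_tsum hm]
      refine ne_top_of_le_ne_top ?_ (ENNReal.tsum_le_tsum hle)
      rw [← ENNReal.ofReal_tsum_of_nonneg (fun n => by positivity)
        ((summable_geometric_of_lt_one (by norm_num) (by norm_num)).mul_left 4)]
      exact ENNReal.ofReal_ne_top
    filter_upwards [ae_lt_top' (AEMeasurable.tsum hm) hsum] with x hx
    rw [tendsto_zero_iff_norm_tendsto_zero]
    exact log_to_zero (fun n => norm_nonneg _) (ENNReal.tendsto_atTop_zero_of_tsum_ne_top hx.ne)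
  have hb : ∀ k, ∀ᵐ x ∂μI, FHT (h k) x + Complex.I * h k x =
      ((FHT (fun s => (prt 0 (h k s) : ℂ)) x + Complex.I * (prt 0 (h k x) : ℂ)) -
      (FHT (fun s => (prt 1 (h k s) : ℂ)) x + Complex.I * (prt 1 (h k x) : ℂ))) +
      Complex.I * ((FHT (fun s => (prt 2 (h k s) : ℂ)) x + Complex.I * (prt 2 (h k x) : ℂ)) -
      (FHT (fun s => (prt 3 (h k s) : ℂ)) x + Complex.I * (prt 3 (h k x) : ℂ))) := by
    intro k
    have hpi : ∀ i, Integrable (fun s => (prt i (h k s) : ℂ)) μI := fun i => (prt_int (hi k) i).ofReal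
    filter_upwards [bv_upper (hi k), bv_upper (hpi 0), bv_upper (hpi 1), bv_upper (hpi 2), bv_upper (hpi 3)]
      with x hx h0 h1 h2 h3
    refine tendsto_nhds_unique hx.2 ?_
    refine Tendsto.congr' ?_ ((h0.2.sub h1.2).add ((h2.2.sub h3.2).const_mul Complex.I))
    filter_upwards [self_mem_nhdsWithin] with ε hε
    exact (CT_prt (hi k) (by simpa using (ne_of_gt hε))).symm
  filter_upwards [ae_all_iff.2 hb, key 0, key 1, key 2, key 3] with x hx k0 k1 k2 k3
  have h1 := (k0.sub k1).add ((k2.sub k3).const_mul Complex.I)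
  have h2 := h1.sub ((h0 x).const_mul Complex.I)
  simp only [sub_zero, mul_zero, add_zero] at h2
  refine h2.congr fun k => ?_
  rw [← hx k]; ring

/-- continuous truncation -/
def trunc (n : ℕ) (w : ℂ) : ℂ := ((((n : ℝ) + 1) / max ((n : ℝ) + 1) ‖w‖ : ℝ) : ℂ) * w

lemma trunc_cont (n : ℕ) : Continuous (trunc n) := by
  unfold trunc
  refine (Complex.continuous_ofReal.comp ?_).mul continuous_id
  refine continuous_const.div (by fun_prop) fun w => ?_
  have : (0:ℝ) < max ((n : ℝ) + 1) ‖w‖ := lt_max_of_lt_left (by positivity)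
  exact this.ne'

lemma trunc_norm (n : ℕ) (w : ℂ) : ‖trunc n w‖ = ((n : ℝ) + 1) / max ((n : ℝ) + 1) ‖w‖ * ‖w‖ := by
  unfold trunc
  have : (0:ℝ) < max ((n : ℝ) + 1) ‖w‖ := lt_max_of_lt_left (by positivity)
  rw [norm_mul, Complex.norm_real, Real.norm_of_nonneg (by positivity)]

lemma trunc_le (n : ℕ) (w : ℂ) : ‖trunc n w‖ ≤ ‖w‖ := by
  rw [trunc_norm]
  have : (0:ℝ) < max ((n : ℝ) + 1) ‖w‖ := lt_max_of_lt_left (by positivity)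
  refine mul_le_of_le_one_left (norm_nonneg _) ?_
  rw [div_le_one this]; exact le_max_left _ _

lemma trunc_bdd (n : ℕ) (w : ℂ) : ‖trunc n w‖ ≤ (n : ℝ) + 1 := by
  rw [trunc_norm]
  have : (0:ℝ) < max ((n : ℝ) + 1) ‖w‖ := lt_max_of_lt_left (by positivity)
  rw [div_mul_eq_mul_div, div_le_iff₀ this]
  gcongr; exact le_max_right _ _

lemma trunc_tendsto (w : ℂ) : Tendsto (fun n => trunc n w) atTop (𝓝 w) := by
  refine Tendsto.congr' ?_ tendsto_const_nhds
  obtain ⟨N, hN⟩ := exists_nat_ge ‖w‖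
  filter_upwards [eventually_ge_atTop N] with n hn
  have : ‖w‖ ≤ (n : ℝ) + 1 := by
    have : (N : ℝ) ≤ n := by exact_mod_cast hn
    linarith
  unfold trunc
  rw [max_eq_left this, div_self (by positivity)]; simp

lemma approx {f : ℝ → ℂ} (hf : Integrable f μI) : ∃ F : ℕ → ℝ → ℂ,
    (∀ n, AEStronglyMeasurable (F n) μI) ∧ (∀ n, ∃ M, ∀ s, ‖F n s‖ ≤ M) ∧ (∀ n s, ‖F n s‖ ≤ ‖f s‖) ∧
    (∀ s, Tendsto (fun n => F n s) atTop (𝓝 (f s))) ∧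
    (∀ᵐ x ∂μI, Tendsto (fun n => FHT (F n) x) atTop (𝓝 (FHT f x))) := by
  have hm : ∀ n, AEStronglyMeasurable (fun s => trunc n (f s)) μI := fun n => (trunc_cont n).comp_aestronglyMeasurable hf.1
  have hi : ∀ n, Integrable (fun s => trunc n (f s)) μI := fun n =>
    hf.mono (hm n) (Eventually.of_forall fun s => trunc_le _ _)
  have hlim : Tendsto (fun n => ∫ s, ‖f s - trunc n (f s)‖ ∂μI) atTop (𝓝 0) := by
    have := tendsto_integral_of_dominated_convergence (μ := μI) (F := fun n s => ‖f s - trunc n (f s)‖) (f := fun _ => (0:ℝ))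
      (fun s => 2 * ‖f s‖) (fun n => (hf.1.sub (hm n)).norm) (hf.norm.const_mul 2)
      (fun n => Eventually.of_forall fun s => by
        rw [norm_norm]
        have := norm_sub_le (f s) (trunc n (f s))
        have := trunc_le n (f s)
        linarith)
      (Eventually.of_forall fun s => by
        have := ((trunc_tendsto (f s)).const_sub (f s)).norm
        simpa using this)
    simpa using this
  obtain ⟨φ, hφ, hφ2⟩ := extraction_forall_of_eventually (P := fun k n => ∫ s, ‖f s - trunc n (f s)‖ ∂μI ≤ (1/2:ℝ)^k)
    (fun k => (hlim.eventually_lt_const (by positivity : (0:ℝ) < (1/2)^k)).mono fun n hn => hn.le)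
  refine ⟨fun k s => trunc (φ k) (f s), fun k => hm _, fun k => ⟨_, fun s => trunc_bdd _ _⟩, fun k s => trunc_le _ _,
    fun s => (trunc_tendsto (f s)).comp hφ.tendsto_atTop, ?_⟩
  have h1 := FHT_to_zero (h := fun k s => f s - trunc (φ k) (f s)) (fun k => hf.sub (hi _)) hφ2 (fun s => by
    have := ((trunc_tendsto (f s)).comp hφ.tendsto_atTop).const_sub (f s)
    simpa using this)
  have h2 : ∀ᵐ x ∂μI, ∀ k, FHT (fun s => f s - trunc (φ k) (f s)) x = FHT f x - FHT (fun s => trunc (φ k) (f s)) x :=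
    ae_all_iff.2 fun k => FHT_sub hf (hi _)
  filter_upwards [h1, h2] with x hx hx2
  have := hx.const_sub (FHT f x)
  simp only [hx2, sub_sub_cancel, sub_zero] at this
  exact this

def UAC {ι : Type} (u : ι → ℝ → ℂ) : Prop := ∀ ε : ℝ, 0 < ε → ∃ δ : ℝ, 0 < δ ∧ ∀ i, ∀ s : Set ℝ, MeasurableSet s →
  μI s ≤ ENNReal.ofReal δ → ∫⁻ x in s, ‖u i x‖ₑ ∂μI ≤ ENNReal.ofReal ε

lemma eLpNorm_ind {s : Set ℝ} (hs : MeasurableSet s) (v : ℝ → ℂ) :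
    eLpNorm (s.indicator v) 1 μI = ∫⁻ x in s, ‖v x‖ₑ ∂μI := by
  rw [eLpNorm_one_eq_lintegral_enorm, ← lintegral_indicator hs]
  refine lintegral_congr fun x => ?_
  by_cases h : x ∈ s <;> simp [h]

lemma UAC.unif {ι : Type} {u : ι → ℝ → ℂ} (hu : UAC u) : UnifIntegrable u 1 μI := by
  intro ε hε
  obtain ⟨δ, hδ, h⟩ := hu ε hε
  refine ⟨δ, hδ, fun i s hs hμ => ?_⟩
  rw [eLpNorm_ind hs]; exact h i s hs hμ

lemma int_of_ac {v : ℝ → ℂ} (hv : AEStronglyMeasurable v μI) {δ : ℝ} (hδ : 0 < δ)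
    (h : ∀ s : Set ℝ, MeasurableSet s → μI s ≤ ENNReal.ofReal δ → ∫⁻ x in s, ‖v x‖ₑ ∂μI < ⊤) : Integrable v μI := by
  set w := hv.mk v with hw
  have hwm : StronglyMeasurable w := hv.stronglyMeasurable_mk
  refine Integrable.congr (f := w) ?_ hv.ae_eq_mk.symm
  set S : ℕ → Set ℝ := fun n => {x | (n : ℝ) < ‖w x‖} with hS
  have hSm : ∀ n, MeasurableSet (S n) := fun n => measurableSet_lt measurable_const hwm.norm.measurable
  have hanti : Antitone S := fun n m hnm x (hx : (m:ℝ) < ‖w x‖) => by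
    show (n:ℝ) < ‖w x‖
    have : (n:ℝ) ≤ m := by exact_mod_cast hnm
    linarith
  have hinter : ⋂ n, S n = ∅ := by
    ext x
    simp only [mem_iInter, mem_empty_iff_false, iff_false, not_forall]
    obtain ⟨n, hn⟩ := exists_nat_ge ‖w x‖
    exact ⟨n, fun h : (n:ℝ) < ‖w x‖ => by linarith⟩
  have ht := tendsto_measure_iInter_atTop (μ := μI) (fun n => (hSm n).nullMeasurableSet) hanti ⟨0, measure_ne_top _ _⟩
  rw [hinter, measure_empty] at ht
  obtain ⟨n, hn⟩ := (ht.eventually_lt_const (ENNReal.ofReal_pos.2 hδ)).exists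
  have h1 : Integrable ((S n).indicator w) μI := by
    rw [← memLp_one_iff_integrable]
    refine ⟨(hwm.indicator (hSm n)).aestronglyMeasurable, ?_⟩
    rw [eLpNorm_ind (hSm n)]
    refine lt_of_le_of_lt (le_of_eq ?_) (h (S n) (hSm n) hn.le)
    refine lintegral_congr_ae (ae_restrict_of_ae ?_)
    filter_upwards [hv.ae_eq_mk] with x hx
    rw [hx]
  have h2 : Integrable ((S n)ᶜ.indicator w) μI := by
    refine Integrable.of_bound (hwm.indicator (hSm n).compl).aestronglyMeasurable n (Eventually.of_forall fun x => ?_)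
    by_cases hx : x ∈ S n
    · simp [hx]
    · rw [indicator_of_mem (by exact hx)]
      exact not_lt.1 hx
  have := h1.add h2
  rwa [indicator_self_add_compl] at this

theorem vitali {u : ℕ → ℝ → ℂ} {v : ℝ → ℂ} (hm : ∀ n, AEStronglyMeasurable (u n) μI) (hu : UAC u)
    (hae : ∀ᵐ x ∂μI, Tendsto (fun n => u n x) atTop (𝓝 (v x))) :
    Integrable v μI ∧ Tendsto (fun n => ∫⁻ x, ‖u n x - v x‖ₑ ∂μI) atTop (𝓝 0) := by
  have hv : AEStronglyMeasurable v μI := aestronglyMeasurable_of_tendsto_ae atTop hm hae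
  obtain ⟨δ, hδ, h⟩ := hu 1 one_pos
  have hvi : Integrable v μI := by
    refine int_of_ac hv hδ fun s hs hμ => ?_
    refine lt_of_le_of_lt (b := ENNReal.ofReal 1) ?_ ENNReal.ofReal_lt_top
    have h1 : ∫⁻ x in s, ‖v x‖ₑ ∂μI = ∫⁻ x in s, liminf (fun n => ‖u n x‖ₑ) atTop ∂μI := by
      refine lintegral_congr_ae (ae_restrict_of_ae ?_)
      filter_upwards [hae] with x hx
      exact (hx.enorm).liminf_eq.symm
    rw [h1]
    refine (lintegral_liminf_le' fun n => (hm n).restrict.enorm).trans ?_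
    refine (liminf_le_liminf (Eventually.of_forall fun n => h n s hs hμ)).trans ?_
    simp
  refine ⟨hvi, ?_⟩
  have := tendsto_Lp_finite_of_tendsto_ae (μ := μI) le_rfl ENNReal.one_ne_top hm (memLp_one_iff_integrable.2 hvi) hu.unif hae
  simpa [eLpNorm_one_eq_lintegral_enorm] using this

lemma vitali_integral {u : ℕ → ℝ → ℂ} {v : ℝ → ℂ} (hi : ∀ n, Integrable (u n) μI) (hu : UAC u)
    (hae : ∀ᵐ x ∂μI, Tendsto (fun n => u n x) atTop (𝓝 (v x))) :
    Integrable v μI ∧ Tendsto (fun n => ∫ x, u n x ∂μI) atTop (𝓝 (∫ x, v x ∂μI)) := by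
  obtain ⟨h1, h2⟩ := vitali (fun n => (hi n).1) hu hae
  exact ⟨h1, tendsto_integral_of_L1 v h1.1 (Eventually.of_forall hi) h2⟩

/-- L log L class, convenient form -/
def LG (g : ℝ → ℂ) : Prop := AEStronglyMeasurable g μI ∧ Integrable (fun x => ‖g x‖ * Real.log (2 + ‖g x‖)) μI

lemma LG_of_MemLlogL {g : ℝ → ℂ} (hg : MemLlogL g) : LG g := by
  refine ⟨hg.1, ?_⟩
  have h1 : Integrable (fun x => 2 * (‖g x‖ * max (Real.log ‖g x‖) 0) + 2 * Real.log 4) μI :=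
    (Integrable.const_mul hg.2 2).add (integrable_const _)
  refine h1.mono' ?_ (Eventually.of_forall fun x => ?_)
  · exact hg.1.norm.mul (Real.measurable_log.comp_aemeasurable (hg.1.norm.aemeasurable.const_add 2)).aestronglyMeasurable
  · set a := ‖g x‖
    have ha : 0 ≤ a := norm_nonneg _
    have hl : 0 ≤ Real.log (2 + a) := Real.log_nonneg (by linarith)
    rw [Real.norm_of_nonneg (by positivity)]
    rcases le_total a 2 with h | h
    · have : Real.log (2 + a) ≤ Real.log 4 := Real.log_le_log (by linarith) (by linarith)
      have h4 : a * Real.log (2 + a) ≤ 2 * Real.log 4 := by gcongr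
      have : 0 ≤ a * max (Real.log a) 0 := by positivity
      linarith
    · have h3 : Real.log (2 + a) ≤ 2 * Real.log a := by
        rw [← Real.log_rpow (by linarith)]
        apply Real.log_le_log (by linarith)
        norm_num
        nlinarith
      have h4 : Real.log a ≤ max (Real.log a) 0 := le_max_left _ _
      have h5 : 0 ≤ Real.log 4 := Real.log_nonneg (by norm_num)
      nlinarith

lemma LG.integrable {g : ℝ → ℂ} (hg : LG g) : Integrable g μI := by
  have hl : 0 < Real.log 2 := Real.log_pos (by norm_num)
  refine (hg.2.const_mul (Real.log 2)⁻¹).mono' hg.1 (Eventually.of_forall fun x => ?_)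
  rw [inv_mul_eq_div, le_div_iff₀ hl]
  gcongr
  linarith [norm_nonneg (g x)]

lemma LG.dom {g h : ℝ → ℂ} (hg : LG g) (hh : AEStronglyMeasurable h μI) {c : ℝ} (hc : ∀ x, ‖h x‖ ≤ c * ‖g x‖) : LG h := by
  refine ⟨hh, ?_⟩
  set C := max c 1 with hC
  have hC1 : 1 ≤ C := le_max_right _ _
  have hCn : ∀ x, ‖h x‖ ≤ C * ‖g x‖ := fun x => (hc x).trans (by gcongr; exact le_max_left _ _)
  have h1 : Integrable (fun x => C * (Real.log C * ‖g x‖ + ‖g x‖ * Real.log (2 + ‖g x‖))) μI :=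
    ((hg.integrable.norm.const_mul _).add hg.2).const_mul C
  refine h1.mono' ?_ (Eventually.of_forall fun x => ?_)
  · exact hh.norm.mul (Real.measurable_log.comp_aemeasurable (hh.norm.aemeasurable.const_add 2)).aestronglyMeasurable
  · have ha : 0 ≤ ‖g x‖ := norm_nonneg _
    have hb : 0 ≤ ‖h x‖ := norm_nonneg _
    have hl : 0 ≤ Real.log (2 + ‖h x‖) := Real.log_nonneg (by linarith)
    rw [Real.norm_of_nonneg (by positivity)]
    have h2 : Real.log (2 + ‖h x‖) ≤ Real.log C + Real.log (2 + ‖g x‖) := by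
      rw [← Real.log_mul (by positivity) (by positivity)]
      apply Real.log_le_log (by positivity)
      have := hCn x
      nlinarith
    calc ‖h x‖ * Real.log (2 + ‖h x‖) ≤ (C * ‖g x‖) * (Real.log C + Real.log (2 + ‖g x‖)) := by
          have := hCn x
          gcongr
      _ = _ := by ring

lemma young {a b ε : ℝ} (ha : 0 ≤ a) (hb : 0 ≤ b) (hε : 0 < ε) :
    a * b ≤ 4 * (a * Real.log (2 + a)) + ε * Real.exp (b / 2) + 8 * (8 / ε) ^ 3 := by
  have hl : 0 ≤ Real.log (2 + a) := Real.log_nonneg (by linarith)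
  rcases le_total b (4 * Real.log (2 + a)) with h | h
  · have h1 : a * b ≤ a * (4 * Real.log (2 + a)) := by gcongr
    have h2 : 0 ≤ ε * Real.exp (b / 2) + 8 * (8 / ε) ^ 3 := by positivity
    linarith
  · have h1 : a ≤ Real.exp (b / 4) := by
      have : 2 + a ≤ Real.exp (b / 4) := by
        rw [← Real.log_le_iff_le_exp (by linarith)]; linarith
      linarith
    set Y := Real.exp (b / 8) with hY
    have hY0 : 0 < Y := Real.exp_pos _
    have e2 : Real.exp (b / 4) = Y ^ 2 := by rw [hY, ← Real.exp_nat_mul]; congr 1; push_cast; ring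
    have e4 : Real.exp (b / 2) = Y ^ 4 := by rw [hY, ← Real.exp_nat_mul]; congr 1; push_cast; ring
    have hb8 : b ≤ 8 * Y := by
      have := Real.add_one_le_exp (b / 8)
      rw [← hY] at this; linarith
    have h3 : a * b ≤ 8 * Y ^ 3 := by
      calc a * b ≤ Y ^ 2 * (8 * Y) := by rw [e2] at h1; gcongr
        _ = _ := by ring
    have h4 : 8 * Y ^ 3 ≤ ε * Y ^ 4 + 8 * (8 / ε) ^ 3 := by
      rcases le_total Y (8 / ε) with h | h
      · have : 8 * Y ^ 3 ≤ 8 * (8 / ε) ^ 3 := by gcongr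
        have : 0 ≤ ε * Y ^ 4 := by positivity
        linarith
      · have h5 : 8 ≤ ε * Y := by rw [div_le_iff₀ hε] at h; linarith
        have : 8 * Y ^ 3 ≤ ε * Y * Y ^ 3 := by gcongr
        have h6 : 0 ≤ 8 * (8 / ε) ^ 3 := by positivity
        nlinarith
    rw [e4]
    have : 0 ≤ 4 * (a * Real.log (2 + a)) := by positivity
    linarith

theorem U2 {g : ℝ → ℂ} (hg : LG g) {ε : ℝ} (hε : 0 < ε) : ∃ η : ℝ, 0 < η ∧ ∀ θ : ℝ → ℂ, AEStronglyMeasurable θ μI →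
    (∀ s, ‖θ s‖ ≤ 1) → ∀ δ : ℝ, δ ≠ 0 → ∀ E : Set ℝ, MeasurableSet E → μI E ≤ ENNReal.ofReal η →
    ∫⁻ x in E, ‖g x * CT θ (x + δ * Complex.I)‖ₑ ∂μI ≤ ENNReal.ofReal ε := by
  have hC0 := C0_pos
  set e1 := ε / 4 / C0 with he1
  have he1p : 0 < e1 := by positivity
  set M := 8 * (8 / e1) ^ 3 with hM
  have hMp : 0 < M := by positivity
  have hfin : ∫⁻ x, ENNReal.ofReal (‖g x‖ * Real.log (2 + ‖g x‖)) ∂μI ≠ ⊤ := by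
    have := hg.2.lintegral_lt_top
    exact this.ne
  obtain ⟨η1, hη1, h1⟩ := exists_pos_setLIntegral_lt_of_measure_lt hfin (ε := ENNReal.ofReal (ε / 16)) (by simpa using hε)
  obtain ⟨η2, hη2, hη2'⟩ : ∃ η2 : ℝ, 0 < η2 ∧ ENNReal.ofReal η2 < η1 := by
    obtain ⟨q, hq0, hq⟩ := ENNReal.lt_iff_exists_real_btwn.1 hη1
    exact ⟨q, by simpa using hq.1, hq.2⟩
  refine ⟨min η2 (ε / 4 / M), by positivity, fun θ hθ hθ1 δ hδ E hE hμ => ?_⟩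
  have hμ1 : μI E < η1 := lt_of_le_of_lt (hμ.trans (ENNReal.ofReal_le_ofReal (min_le_left _ _))) hη2'
  have hμ2 : μI E ≤ ENNReal.ofReal (ε / 4 / M) := hμ.trans (ENNReal.ofReal_le_ofReal (min_le_right _ _))
  have hA := h1 E hμ1
  have hB := exp_bound hθ hθ1 hδ
  have hBm : Measurable fun x : ℝ => ENNReal.ofReal (Real.exp (‖CT θ (x + δ * Complex.I)‖ / 2)) :=
    (ENNReal.continuous_ofReal.comp (Real.continuous_exp.comp ((CT_cont (bdd_int hθ hθ1) hδ).norm.div_const 2))).measurable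
  have hpt : ∀ x : ℝ, ‖g x * CT θ (x + δ * Complex.I)‖ₑ ≤ ENNReal.ofReal 4 * ENNReal.ofReal (‖g x‖ * Real.log (2 + ‖g x‖)) +
      ENNReal.ofReal e1 * ENNReal.ofReal (Real.exp (‖CT θ (x + δ * Complex.I)‖ / 2)) + ENNReal.ofReal M := by
    intro x
    have hl : 0 ≤ Real.log (2 + ‖g x‖) := Real.log_nonneg (by linarith [norm_nonneg (g x)])
    rw [← ENNReal.ofReal_mul (by positivity), ← ENNReal.ofReal_mul (by positivity),
      ← ENNReal.ofReal_add (by positivity) (by positivity), ← ENNReal.ofReal_add (by positivity) (by positivity),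
      ← ofReal_norm, norm_mul]
    exact ENNReal.ofReal_le_ofReal (young (norm_nonneg _) (norm_nonneg _) he1p)
  refine (lintegral_mono hpt).trans ?_
  rw [lintegral_add_right _ measurable_const, lintegral_add_right _ (hBm.const_mul _),
    lintegral_const_mul' _ _ ENNReal.ofReal_ne_top, lintegral_const_mul' _ _ ENNReal.ofReal_ne_top, setLIntegral_const]
  calc _ ≤ ENNReal.ofReal 4 * ENNReal.ofReal (ε / 16) + ENNReal.ofReal e1 * ENNReal.ofReal C0 +
        ENNReal.ofReal M * ENNReal.ofReal (ε / 4 / M) := by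
        gcongr
        exact (setLIntegral_le_lintegral _ _).trans hB
    _ = ENNReal.ofReal (4 * (ε / 16) + e1 * C0 + M * (ε / 4 / M)) := by
        rw [← ENNReal.ofReal_mul (by positivity), ← ENNReal.ofReal_mul (by positivity), ← ENNReal.ofReal_mul (by positivity),
          ← ENNReal.ofReal_add (by positivity) (by positivity), ← ENNReal.ofReal_add (by positivity) (by positivity)]
    _ ≤ _ := by
        apply ENNReal.ofReal_le_ofReal
        rw [he1]
        have : ε / 4 / C0 * C0 = ε / 4 := by field_simp
        rw [this]
        have : M * (ε / 4 / M) = ε / 4 := by field_simp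
        rw [this]; linarith

lemma swapCT {f g : ℝ → ℂ} (hf : Integrable f μI) (hg : Integrable g μI) {δ : ℝ} (hδ : δ ≠ 0) :
    ∫ x, f x * CT g (x + δ * Complex.I) ∂μI = - ∫ s, g s * CT f (s + (-δ : ℝ) * Complex.I) ∂μI := by
  have hne : ∀ p : ℝ × ℝ, (p.2 : ℂ) - (p.1 + δ * Complex.I) ≠ 0 := fun p =>
    sub_ne (z := p.1 + δ * Complex.I) (by simpa using hδ) p.2
  have hk : Continuous (fun p : ℝ × ℝ => ((p.2 : ℂ) - (p.1 + δ * Complex.I))⁻¹) :=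
    Continuous.inv₀ (by fun_prop) hne
  have hI : Integrable (Function.uncurry fun x s : ℝ => f x * g s * ((s : ℂ) - (x + δ * Complex.I))⁻¹) (μI.prod μI) := by
    refine (hf.mul_prod hg).mul_bdd (c := |δ|⁻¹) hk.aestronglyMeasurable (Eventually.of_forall fun p => ?_)
    have := kern_norm_le (z := p.1 + δ * Complex.I) (by simpa using hδ) p.2
    simpa using this
  have h := integral_integral_swap hI
  unfold CT
  calc ∫ x, f x * ((Real.pi : ℂ)⁻¹ * ∫ s, g s / ((s : ℂ) - (x + δ * Complex.I)) ∂μI) ∂μI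
      = (Real.pi : ℂ)⁻¹ * ∫ x, ∫ s, f x * g s * ((s : ℂ) - (x + δ * Complex.I))⁻¹ ∂μI ∂μI := by
        rw [← integral_const_mul]
        congr 1; funext x
        rw [mul_left_comm, ← integral_const_mul]
        congr 2; funext s; rw [div_eq_mul_inv]; ring
    _ = (Real.pi : ℂ)⁻¹ * ∫ s, ∫ x, f x * g s * ((s : ℂ) - (x + δ * Complex.I))⁻¹ ∂μI ∂μI := by rw [h]
    _ = _ := by
        rw [← integral_const_mul, ← integral_neg]
        congr 1; funext s
        rw [mul_left_comm, ← mul_neg, ← neg_mul]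
        congr 1
        rw [← integral_const_mul]
        congr 1; funext x
        rw [div_eq_mul_inv]
        have : (x : ℂ) - (s + (-δ : ℝ) * Complex.I) = -((s : ℂ) - (x + δ * Complex.I)) := by push_cast; ring
        rw [this, inv_neg]; ring

def csgn (w : ℂ) : ℂ := (starRingEnd ℂ) w / (‖w‖ : ℂ)
lemma csgn_meas : Measurable csgn := by
  unfold csgn
  exact Complex.continuous_conj.measurable.div (Complex.continuous_ofReal.comp continuous_norm).measurable
lemma csgn_le (w : ℂ) : ‖csgn w‖ ≤ 1 := by
  unfold csgn
  simp
  exact div_self_le_one _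
lemma csgn_mul (w : ℂ) : csgn w * w = (‖w‖ : ℂ) := by
  unfold csgn
  by_cases h : w = 0
  · simp [h]
  · have : (‖w‖ : ℂ) ≠ 0 := by simpa using h
    rw [div_mul_eq_mul_div, div_eq_iff this, mul_comm, Complex.mul_conj, Complex.normSq_eq_norm_sq]
    push_cast; ring

lemma CT_slice_bdd {g : ℝ → ℂ} (hg : Integrable g μI) {δ : ℝ} (hδ : δ ≠ 0) :
    ∃ c, ∀ x : ℝ, ‖CT g (x + δ * Complex.I)‖ ≤ c :=
  ⟨Real.pi⁻¹ * (|δ|⁻¹ * ∫ s, ‖g s‖ ∂μI), fun x => by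
    have := CT_norm_le hg (z := x + δ * Complex.I) (by simpa using hδ)
    simpa using this⟩

lemma CT_slice_int {g : ℝ → ℂ} (hg : Integrable g μI) {δ : ℝ} (hδ : δ ≠ 0) :
    Integrable (fun x : ℝ => CT g (x + δ * Complex.I)) μI := by
  obtain ⟨c, hc⟩ := CT_slice_bdd hg hδ
  exact bdd_int (CT_cont hg hδ).aestronglyMeasurable hc

lemma mul_CT_int {f g : ℝ → ℂ} (hf : Integrable f μI) (hg : Integrable g μI) {δ : ℝ} (hδ : δ ≠ 0) :
    Integrable (fun x : ℝ => f x * CT g (x + δ * Complex.I)) μI := by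
  obtain ⟨c, hc⟩ := CT_slice_bdd hg hδ
  exact hf.mul_bdd (CT_cont hg hδ).aestronglyMeasurable (Eventually.of_forall hc)

lemma dualE {g : ℝ → ℂ} (hg : Integrable g μI) {δ : ℝ} (hδ : δ ≠ 0) {E : Set ℝ} (hE : MeasurableSet E) :
    ∃ ψ : ℝ → ℂ, AEStronglyMeasurable ψ μI ∧ (∀ s, ‖ψ s‖ ≤ 1) ∧ (∀ s, s ∉ E → ψ s = 0) ∧
      ∫⁻ x in E, ‖CT g (x + δ * Complex.I)‖ₑ ∂μI ≤ ∫⁻ x, ‖g x * CT ψ (x + (-δ : ℝ) * Complex.I)‖ₑ ∂μI := by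
  set h : ℝ → ℂ := fun x => CT g (x + δ * Complex.I) with hh
  have hc : Continuous h := CT_cont hg hδ
  set ψ : ℝ → ℂ := E.indicator fun x => csgn (h x) with hψ
  have hψm : AEStronglyMeasurable ψ μI := ((csgn_meas.comp hc.measurable).indicator hE).aestronglyMeasurable
  have hψ1 : ∀ s, ‖ψ s‖ ≤ 1 := fun s => by
    by_cases hs : s ∈ E
    · rw [hψ, indicator_of_mem hs]; exact csgn_le _
    · rw [hψ, indicator_of_notMem hs]; simp
  refine ⟨ψ, hψm, hψ1, fun s hs => indicator_of_notMem hs _, ?_⟩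
  have e1 : ∫ x, ψ x * h x ∂μI = ((∫ x in E, ‖h x‖ ∂μI : ℝ) : ℂ) := by
    rw [← integral_complex_ofReal, ← integral_indicator hE]
    congr 1; funext x
    by_cases hx : x ∈ E
    · simp [hψ, hx, csgn_mul]
    · simp [hψ, hx]
  have e2 : ∫⁻ x in E, ‖h x‖ₑ ∂μI = ‖∫ x, ψ x * h x ∂μI‖ₑ := by
    rw [e1, ← ofReal_norm, Complex.norm_real, Real.norm_of_nonneg (integral_nonneg fun x => norm_nonneg _)]
    rw [ofReal_integral_norm_eq_lintegral_enorm]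
    exact (CT_slice_int hg hδ).integrableOn
  rw [e2, swapCT (bdd_int hψm hψ1) hg hδ, enorm_neg]
  exact enorm_integral_le_lintegral_enorm _

lemma LG_one : LG (fun _ => 1) := by
  refine ⟨aestronglyMeasurable_const, ?_⟩
  simp

theorem UAC_CT {g : ℝ → ℂ} (hg : LG g) {ε : ℝ} (hε : 0 < ε) : ∃ η : ℝ, 0 < η ∧
    ∀ δ : ℝ, δ ≠ 0 → ∀ E : Set ℝ, MeasurableSet E → μI E ≤ ENNReal.ofReal η →
    ∫⁻ x in E, ‖CT g (x + δ * Complex.I)‖ₑ ∂μI ≤ ENNReal.ofReal ε := by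
  obtain ⟨η1, hη1, h1⟩ := U2 hg (half_pos hε)
  obtain ⟨K, hK, hKs⟩ : ∃ K : ℝ, 0 < K ∧ μI {x | ENNReal.ofReal K ≤ ‖g x‖ₑ} ≤ ENNReal.ofReal η1 := by
    have hfin : ∫⁻ x, ‖g x‖ₑ ∂μI < ⊤ := hg.integrable.2
    set J := (∫⁻ x, ‖g x‖ₑ ∂μI).toReal with hJ
    have hJe : ∫⁻ x, ‖g x‖ₑ ∂μI = ENNReal.ofReal J := (ENNReal.ofReal_toReal hfin.ne).symm
    have hJ0 : 0 ≤ J := ENNReal.toReal_nonneg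
    refine ⟨(J + 1) / η1, by positivity, ?_⟩
    have := meas_ge_le_lintegral_div hg.1.enorm (ε := ENNReal.ofReal ((J + 1) / η1)) (by simp; positivity) ENNReal.ofReal_ne_top
    refine this.trans ?_
    rw [hJe, ← ENNReal.ofReal_div_of_pos (by positivity)]
    apply ENNReal.ofReal_le_ofReal
    rw [div_div_eq_mul_div, div_le_iff₀ (by positivity)]
    nlinarith
  obtain ⟨η2, hη2, h2⟩ := U2 LG_one (ε := ε / 2 / K) (by positivity)
  refine ⟨η2, hη2, fun δ hδ E hE hμ => ?_⟩
  obtain ⟨ψ, hψm, hψ1, hψE, hle⟩ := dualE hg.integrable hδ hE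
  refine hle.trans ?_
  set S := toMeasurable μI {x | ENNReal.ofReal K ≤ ‖g x‖ₑ} with hS
  have hSm : MeasurableSet S := measurableSet_toMeasurable _ _
  have hSμ : μI S ≤ ENNReal.ofReal η1 := by rw [hS, measure_toMeasurable]; exact hKs
  have hnδ : -δ ≠ 0 := neg_ne_zero.2 hδ
  rw [← lintegral_add_compl _ hSm]
  have p1 := h1 ψ hψm hψ1 (-δ) hnδ S hSm hSμ
  have p2 : ∫⁻ x in Sᶜ, ‖g x * CT ψ (x + (-δ : ℝ) * Complex.I)‖ₑ ∂μI ≤ ENNReal.ofReal (ε / 2) := by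
    have q1 : ∫⁻ x in Sᶜ, ‖g x * CT ψ (x + (-δ : ℝ) * Complex.I)‖ₑ ∂μI ≤
        ENNReal.ofReal K * ∫⁻ x, ‖CT ψ (x + (-δ : ℝ) * Complex.I)‖ₑ ∂μI := by
      rw [← lintegral_const_mul' _ _ ENNReal.ofReal_ne_top]
      refine le_trans (setLIntegral_mono' hSm.compl fun x hx => ?_) (setLIntegral_le_lintegral Sᶜ _)
      rw [enorm_mul]
      gcongr
      by_contra hcon
      exact hx (subset_toMeasurable _ _ (not_le.1 hcon).le)
    refine q1.trans ?_
    obtain ⟨φ, hφm, hφ1, -, hle2⟩ := dualE (bdd_int hψm hψ1) hnδ MeasurableSet.univ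
    rw [Measure.restrict_univ, neg_neg] at hle2
    have q2 : ∫⁻ x, ‖ψ x * CT φ (x + δ * Complex.I)‖ₑ ∂μI ≤ ∫⁻ x in E, ‖(1 : ℂ) * CT φ (x + δ * Complex.I)‖ₑ ∂μI := by
      rw [← lintegral_indicator hE]
      refine lintegral_mono fun x => ?_
      by_cases hx : x ∈ E
      · simp only [indicator_of_mem hx, enorm_mul]
        gcongr
        rw [← ofReal_norm, ← ofReal_norm]
        apply ENNReal.ofReal_le_ofReal
        simpa using hψ1 x
      · simp [hψE x hx]
    have q3 := h2 φ hφm hφ1 δ hδ E hE hμ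
    calc _ ≤ ENNReal.ofReal K * ENNReal.ofReal (ε / 2 / K) := by
          gcongr
          exact hle2.trans (q2.trans q3)
      _ = _ := by
          rw [← ENNReal.ofReal_mul hK.le]; congr 1; field_simp
  calc _ ≤ ENNReal.ofReal (ε / 2) + ENNReal.ofReal (ε / 2) := add_le_add p1 p2
    _ = _ := by rw [← ENNReal.ofReal_add (by positivity) (by positivity)]; congr 1; ring

lemma CT_scale {f : ℝ → ℂ} {M : ℝ} (hM : 0 < M) (z : ℂ) : CT f z = (M : ℂ) * CT (fun s => (M : ℂ)⁻¹ * f s) z := by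
  have : (M : ℂ) ≠ 0 := by exact_mod_cast hM.ne'
  rw [CT_smul, mul_inv_cancel_left₀ this]

theorem parseval {f g : ℝ → ℂ} (hf : AEStronglyMeasurable f μI) {M : ℝ} (hM : ∀ s, ‖f s‖ ≤ M) (hg : LG g) :
    Integrable (fun x => f x * FHT g x) μI ∧ Integrable (fun x => g x * FHT f x) μI ∧
    ∫ x, f x * FHT g x ∂μI = - ∫ x, g x * FHT f x ∂μI := by
  wlog hMp : 0 < M generalizing M
  · exact this (M := max M 1) (fun s => (hM s).trans (le_max_left _ _)) (by positivity)
  have hfi : Integrable f μI := bdd_int hf hM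
  have hgi := hg.integrable
  have hMc : (M : ℂ) ≠ 0 := by exact_mod_cast hMp.ne'
  have hdn : ∀ n, dn n ≠ 0 := fun n => (dn_pos n).ne'
  have hdn' : ∀ n, -dn n ≠ 0 := fun n => neg_ne_zero.2 (hdn n)
  have A1 : UAC (fun (n : ℕ) (x : ℝ) => f x * CT g (x + dn n * Complex.I)) := by
    intro ε hε
    obtain ⟨η, hη, h⟩ := UAC_CT hg (ε := ε / M) (by positivity)
    refine ⟨η, hη, fun n E hE hμ => ?_⟩
    calc _ ≤ ∫⁻ x in E, ENNReal.ofReal M * ‖CT g (x + dn n * Complex.I)‖ₑ ∂μI := by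
          refine lintegral_mono fun x => ?_
          rw [enorm_mul]; gcongr
          rw [← ofReal_norm]; exact ENNReal.ofReal_le_ofReal (hM x)
      _ = ENNReal.ofReal M * ∫⁻ x in E, ‖CT g (x + dn n * Complex.I)‖ₑ ∂μI := lintegral_const_mul' _ _ ENNReal.ofReal_ne_top
      _ ≤ ENNReal.ofReal M * ENNReal.ofReal (ε / M) := by
          gcongr; exact h _ (hdn n) E hE hμ
      _ = _ := by rw [← ENNReal.ofReal_mul hMp.le]; congr 1; field_simp
  have A2 : UAC (fun (n : ℕ) (x : ℝ) => g x * CT f (x + (-dn n : ℝ) * Complex.I)) := by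
    intro ε hε
    obtain ⟨η, hη, h⟩ := U2 hg (ε := ε / M) (by positivity)
    refine ⟨η, hη, fun n E hE hμ => ?_⟩
    have h3 := h (fun s => (M : ℂ)⁻¹ * f s) (hf.const_mul _) (fun s => by
      rw [norm_mul, norm_inv, Complex.norm_real, Real.norm_of_nonneg hMp.le, inv_mul_le_iff₀ hMp, mul_one]
      exact hM s) _ (hdn' n) E hE hμ
    calc _ = ∫⁻ x in E, ENNReal.ofReal M * ‖g x * CT (fun s => (M : ℂ)⁻¹ * f s) (x + (-dn n : ℝ) * Complex.I)‖ₑ ∂μI := by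
          refine lintegral_congr fun x => ?_
          show ‖g x * CT f (x + (-dn n : ℝ) * Complex.I)‖ₑ = _
          have hMe : ‖(M : ℂ)‖ₑ = ENNReal.ofReal M := by
            rw [← ofReal_norm, Complex.norm_real, Real.norm_of_nonneg hMp.le]
          rw [CT_scale (f := f) hMp, mul_left_comm, enorm_mul (M : ℂ), hMe]
      _ = ENNReal.ofReal M * ∫⁻ x in E, ‖g x * CT (fun s => (M : ℂ)⁻¹ * f s) (x + (-dn n : ℝ) * Complex.I)‖ₑ ∂μI := lintegral_const_mul' _ _ ENNReal.ofReal_ne_top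
      _ ≤ ENNReal.ofReal M * ENNReal.ofReal (ε / M) := by gcongr
      _ = _ := by rw [← ENNReal.ofReal_mul hMp.le]; congr 1; field_simp
  obtain ⟨B1, B2⟩ := vitali_integral (v := fun x => f x * (FHT g x + Complex.I * g x)) (fun n => mul_CT_int hfi hgi (hdn n)) A1 (by
    filter_upwards [bv_upper hgi] with x hx
    exact (hx.2.comp dn_tendsto).const_mul (f x))
  obtain ⟨B3, B4⟩ := vitali_integral (v := fun x => g x * (FHT f x - Complex.I * f x)) (fun n => mul_CT_int hgi hfi (hdn' n)) A2 (by
    filter_upwards [bv_lower hfi] with x hx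
    exact (hx.comp dn_tendsto).const_mul (g x))
  have B5 : ∫ x, f x * (FHT g x + Complex.I * g x) ∂μI = - ∫ x, g x * (FHT f x - Complex.I * f x) ∂μI := by
    refine tendsto_nhds_unique B2 ?_
    refine B4.neg.congr fun n => ?_
    exact (swapCT hfi hgi (hdn n)).symm
  have hfg : Integrable (fun x => Complex.I * (f x * g x)) μI :=
    (hgi.bdd_mul hf (Eventually.of_forall hM)).const_mul _
  have I1 : Integrable (fun x => f x * FHT g x) μI := by
    refine (B1.sub hfg).congr (Eventually.of_forall fun x => ?_)
    simp only [Pi.sub_apply]; ring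
  have I2 : Integrable (fun x => g x * FHT f x) μI := by
    refine (B3.add hfg).congr (Eventually.of_forall fun x => ?_)
    simp only [Pi.add_apply]; ring
  refine ⟨I1, I2, ?_⟩
  have e1 : ∫ x, f x * (FHT g x + Complex.I * g x) ∂μI = ∫ x, f x * FHT g x ∂μI + ∫ x, Complex.I * (f x * g x) ∂μI := by
    rw [← integral_add I1 hfg]; congr 1; funext x; ring
  have e2 : ∫ x, g x * (FHT f x - Complex.I * f x) ∂μI = ∫ x, g x * FHT f x ∂μI - ∫ x, Complex.I * (f x * g x) ∂μI := by
    rw [← integral_sub I2 hfg]; congr 1; funext x; ring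
  rw [e1, e2] at B5
  linear_combination B5

open scoped symmDiff in
lemma MS_complete : CompleteSpace (MeasuredSets μI) := by
  refine EMetric.complete_of_convergent_controlled_sequences (fun n => (2⁻¹ : ENNReal) ^ n) (fun n => by
    exact ENNReal.pow_pos (by simp) _) fun u hu => ?_
  let S : Set ℝ := ⋂ N : ℕ, ⋃ n ≥ N, (u n : Set ℝ)
  have hSm : MeasurableSet S := MeasurableSet.iInter fun N => MeasurableSet.iUnion fun n => MeasurableSet.iUnion fun _ => (u n).2
  refine ⟨⟨S, hSm⟩, ?_⟩
  have hsub : ∀ k, (u k : Set ℝ) ∆ S ⊆ ⋃ j : ℕ, (u (k + j) : Set ℝ) ∆ (u (k + (j + 1)) : Set ℝ) := by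
    intro k x hx
    by_contra hcon
    simp only [mem_iUnion, not_exists] at hcon
    have hiff : ∀ j, (x ∈ (u (k + j) : Set ℝ) ↔ x ∈ (u k : Set ℝ)) := by
      intro j
      induction j with
      | zero => simp
      | succ j ih =>
        have := hcon j
        rw [mem_symmDiff] at this
        tauto
    have hS : x ∈ S ↔ x ∈ (u k : Set ℝ) := by
      simp only [S, mem_iInter, mem_iUnion]
      constructor
      · intro h
        obtain ⟨n, hn, hx⟩ := h k
        obtain ⟨j, rfl⟩ := Nat.exists_eq_add_of_le hn
        exact (hiff j).1 hx
      · intro h N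
        exact ⟨k + N, Nat.le_add_left _ _, (hiff N).2 h⟩
    rw [mem_symmDiff] at hx
    tauto
  have hbd : ∀ k, edist (u k) (⟨S, hSm⟩ : MeasuredSets μI) ≤ (2⁻¹ : ENNReal) ^ k * 2 := by
    intro k
    calc μI ((u k : Set ℝ) ∆ S) ≤ μI (⋃ j : ℕ, (u (k + j) : Set ℝ) ∆ (u (k + (j + 1)) : Set ℝ)) := measure_mono (hsub k)
      _ ≤ ∑' j, μI ((u (k + j) : Set ℝ) ∆ (u (k + (j + 1)) : Set ℝ)) := measure_iUnion_le _
      _ ≤ ∑' j : ℕ, (2⁻¹ : ENNReal) ^ (k + j) := by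
          refine ENNReal.tsum_le_tsum fun j => ?_
          exact (hu (k + j) (k + j) (k + (j + 1)) le_rfl (by omega)).le
      _ = _ := by
          simp only [pow_add]
          rw [ENNReal.tsum_mul_left, ENNReal.tsum_geometric, ENNReal.one_sub_inv_two, inv_inv]
  refine tendsto_iff_edist_tendsto_0.2 ?_
  have hlim : Tendsto (fun k : ℕ => (2⁻¹ : ENNReal) ^ k * 2) atTop (𝓝 0) := by
    have := ENNReal.Tendsto.mul_const (b := (2 : ENNReal)) (ENNReal.tendsto_pow_atTop_nhds_zero_of_lt_one (r := (2⁻¹ : ENNReal)) (by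
      rw [ENNReal.inv_lt_one]; norm_num)) (Or.inr (by simp))
    simpa using this
  exact tendsto_of_tendsto_of_tendsto_of_le_of_le tendsto_const_nhds hlim (fun _ => zero_le) hbd

open scoped symmDiff in
lemma MS_cont {h : ℝ → ℂ} (hh : Integrable h μI) : Continuous (fun s : MeasuredSets μI => ∫ x in (s : Set ℝ), h x ∂μI) := by
  rw [EMetric.continuous_iff]
  intro t ε hε
  obtain ⟨δ, hδ, H⟩ := exists_pos_setLIntegral_lt_of_measure_lt (μ := μI) (f := fun x => ‖h x‖ₑ) hh.2.ne hε.ne'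
  refine ⟨δ, hδ, fun s hs => ?_⟩
  have hsm : MeasurableSet (s : Set ℝ) := s.2
  have htm : MeasurableSet (t : Set ℝ) := t.2
  rw [edist_eq_enorm_sub, ← integral_indicator hsm, ← integral_indicator htm,
    ← integral_sub (hh.indicator hsm) (hh.indicator htm)]
  refine lt_of_le_of_lt (enorm_integral_le_lintegral_enorm _) ?_
  refine lt_of_le_of_lt (le_of_eq ?_) (H ((s : Set ℝ) ∆ t) hs)
  rw [← lintegral_indicator (hsm.symmDiff htm)]
  refine lintegral_congr fun x => ?_
  by_cases h1 : x ∈ (s : Set ℝ) <;> by_cases h2 : x ∈ (t : Set ℝ) <;> simp [h1, h2, mem_symmDiff]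

lemma ac_of_int {h : ℝ → ℂ} (hh : Integrable h μI) {ε : ℝ} (hε : 0 < ε) : ∃ δ : ℝ, 0 < δ ∧ ∀ B : Set ℝ, MeasurableSet B →
    μI B ≤ ENNReal.ofReal δ → ‖∫ x in B, h x ∂μI‖ ≤ ε := by
  obtain ⟨η1, hη1, h1⟩ := exists_pos_setLIntegral_lt_of_measure_lt (μ := μI) (f := fun x => ‖h x‖ₑ) hh.2.ne (ε := ENNReal.ofReal ε) (by simpa using hε)
  obtain ⟨q, hq0, hq⟩ := ENNReal.lt_iff_exists_real_btwn.1 hη1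
  refine ⟨q, by simpa using hq.1, fun B hB hμ => ?_⟩
  have := (enorm_integral_le_lintegral_enorm (μ := μI.restrict B) h).trans (h1 B (lt_of_le_of_lt hμ hq.2)).le
  rw [← ofReal_norm] at this
  exact (ENNReal.ofReal_le_ofReal_iff hε.le).1 this

lemma abs_int_real {u : ℝ → ℝ} (hm : Measurable u) (hu : Integrable u μI) {E : Set ℝ} (hE : MeasurableSet E) {ε : ℝ}
    (h : ∀ B ⊆ E, MeasurableSet B → |∫ x in B, u x ∂μI| ≤ ε) : ∫ x in E, |u x| ∂μI ≤ 2 * ε := by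
  have h1 := integral_norm_eq_pos_sub_neg (hu.restrict (s := E))
  have m1 : MeasurableSet {x | 0 ≤ u x} := measurableSet_le measurable_const hm
  have m2 : MeasurableSet {x | u x ≤ 0} := measurableSet_le hm measurable_const
  rw [Measure.restrict_restrict m1, Measure.restrict_restrict m2] at h1
  simp only [Real.norm_eq_abs] at h1
  rw [h1]
  have a1 := h ({x | 0 ≤ u x} ∩ E) inter_subset_right (m1.inter hE)
  have a2 := h ({x | u x ≤ 0} ∩ E) inter_subset_right (m2.inter hE)
  have := (abs_le.1 a1).2
  have := (abs_le.1 a2).1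
  linarith

lemma abs_int {h : ℝ → ℂ} (hh : Integrable h μI) {E : Set ℝ} (hE : MeasurableSet E) {ε : ℝ}
    (H : ∀ B ⊆ E, MeasurableSet B → ‖∫ x in B, h x ∂μI‖ ≤ ε) : ∫⁻ x in E, ‖h x‖ₑ ∂μI ≤ ENNReal.ofReal (4 * ε) := by
  set w := hh.1.mk h with hw
  have hae : h =ᵐ[μI] w := hh.1.ae_eq_mk
  have hwm : Measurable w := hh.1.stronglyMeasurable_mk.measurable
  have hwi : Integrable w μI := hh.congr hae
  have H' : ∀ B ⊆ E, MeasurableSet B → ‖∫ x in B, w x ∂μI‖ ≤ ε := fun B hB hm => by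
    rw [← integral_congr_ae (ae_restrict_of_ae hae)]; exact H B hB hm
  have r1 := abs_int_real (u := fun x => (w x).re) (Complex.measurable_re.comp hwm) hwi.re hE (ε := ε) fun B hB hm => by
    have e : ∫ x in B, (w x).re ∂μI = (∫ x in B, w x ∂μI).re := integral_re (𝕜 := ℂ) hwi.restrict
    rw [e]
    exact (Complex.abs_re_le_norm _).trans (H' B hB hm)
  have r2 := abs_int_real (u := fun x => (w x).im) (Complex.measurable_im.comp hwm) hwi.im hE (ε := ε) fun B hB hm => by
    have e : ∫ x in B, (w x).im ∂μI = (∫ x in B, w x ∂μI).im := integral_im (𝕜 := ℂ) hwi.restrict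
    rw [e]
    exact (Complex.abs_im_le_norm _).trans (H' B hB hm)
  have hn : ∫ x in E, ‖w x‖ ∂μI ≤ 4 * ε := by
    calc ∫ x in E, ‖w x‖ ∂μI ≤ ∫ x in E, (|(w x).re| + |(w x).im|) ∂μI :=
          integral_mono hwi.norm.restrict (hwi.re.abs.restrict.add hwi.im.abs.restrict) fun x => Complex.norm_le_abs_re_add_abs_im _
      _ = ∫ x in E, |(w x).re| ∂μI + ∫ x in E, |(w x).im| ∂μI := integral_add hwi.re.abs.restrict hwi.im.abs.restrict
      _ ≤ _ := by linarith
  rw [lintegral_congr_ae (g := fun x => ‖w x‖ₑ) (ae_restrict_of_ae (hae.mono fun x hx => by rw [hx])),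
    ← ofReal_integral_norm_eq_lintegral_enorm hwi.restrict]
  exact ENNReal.ofReal_le_ofReal hn

open scoped symmDiff in
theorem vhs {h : ℕ → ℝ → ℂ} (hi : ∀ n, Integrable (h n) μI)
    (hc : ∀ A : Set ℝ, MeasurableSet A → CauchySeq fun n => ∫ x in A, h n x ∂μI) : UAC h := by
  have key : ∀ ε : ℝ, 0 < ε → ∃ δ : ℝ, 0 < δ ∧ ∀ n, ∀ B : Set ℝ, MeasurableSet B →
      μI B ≤ ENNReal.ofReal δ → ‖∫ x in B, h n x ∂μI‖ ≤ 3 * ε := by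
    intro ε hε
    have := MS_complete
    let F : ℕ → Set (MeasuredSets μI) := fun N => ⋂ n ≥ N, ⋂ m ≥ N,
      {s | ‖∫ x in (s : Set ℝ), h n x ∂μI - ∫ x in (s : Set ℝ), h m x ∂μI‖ ≤ ε}
    have hF : ∀ N, IsClosed (F N) := fun N => isClosed_biInter fun n _ => isClosed_biInter fun m _ =>
      isClosed_le ((MS_cont (hi n)).sub (MS_cont (hi m))).norm continuous_const
    have hFm : ∀ N, ∀ s : MeasuredSets μI, s ∈ F N → ∀ n ≥ N, ∀ m ≥ N,
        ‖∫ x in (s : Set ℝ), h n x ∂μI - ∫ x in (s : Set ℝ), h m x ∂μI‖ ≤ ε := by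
      intro N s hs n hn m hm
      exact mem_iInter₂.1 (mem_iInter₂.1 hs n hn) m hm
    have hU : ⋃ N, F N = univ := by
      refine eq_univ_of_forall fun s => ?_
      obtain ⟨N, hN⟩ := Metric.cauchySeq_iff.1 (hc s s.2) ε hε
      refine mem_iUnion.2 ⟨N, ?_⟩
      refine mem_iInter₂.2 fun n hn => mem_iInter₂.2 fun m hm => ?_
      show ‖_‖ ≤ ε
      rw [← dist_eq_norm]; exact (hN n hn m hm).le
    have : Nonempty (MeasuredSets μI) := ⟨⟨∅, MeasurableSet.empty⟩⟩
    obtain ⟨N, s0, hs0⟩ := nonempty_interior_of_iUnion_of_closed hF hU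
    obtain ⟨r, hr, hball⟩ := EMetric.mem_nhds_iff.1 (mem_interior_iff_mem_nhds.1 hs0)
    obtain ⟨q, hq0, hq⟩ := ENNReal.lt_iff_exists_real_btwn.1 hr
    have hqp : 0 < q := by simpa using hq.1
    have hs0m : MeasurableSet (s0 : Set ℝ) := s0.2
    have step : ∀ B : Set ℝ, MeasurableSet B → μI B ≤ ENNReal.ofReal q → ∀ n ≥ N,
        ‖∫ x in B, h n x ∂μI - ∫ x in B, h N x ∂μI‖ ≤ 2 * ε := by
      intro B hB hμ n hn
      have hlt : μI B < r := lt_of_le_of_lt hμ hq.2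
      have b1 : (⟨(s0 : Set ℝ) ∪ B, hs0m.union hB⟩ : MeasuredSets μI) ∈ F N := by
        refine hball ?_
        show μI (((s0 : Set ℝ) ∪ B) ∆ (s0 : Set ℝ)) < r
        refine lt_of_le_of_lt (measure_mono fun x hx => ?_) hlt
        rw [mem_symmDiff] at hx
        simp only [mem_union] at hx; tauto
      have b2 : (⟨(s0 : Set ℝ) \ B, hs0m.diff hB⟩ : MeasuredSets μI) ∈ F N := by
        refine hball ?_
        show μI (((s0 : Set ℝ) \ B) ∆ (s0 : Set ℝ)) < r
        refine lt_of_le_of_lt (measure_mono fun x hx => ?_) hlt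
        rw [mem_symmDiff] at hx
        simp only [Set.mem_sdiff] at hx; tauto
      have c1 : ‖∫ x in (s0 : Set ℝ) ∪ B, h n x ∂μI - ∫ x in (s0 : Set ℝ) ∪ B, h N x ∂μI‖ ≤ ε := hFm N _ b1 n hn N le_rfl
      have c2 : ‖∫ x in (s0 : Set ℝ) \ B, h n x ∂μI - ∫ x in (s0 : Set ℝ) \ B, h N x ∂μI‖ ≤ ε := hFm N _ b2 n hn N le_rfl
      have e : ∀ k, ∫ x in (s0 : Set ℝ) ∪ B, h k x ∂μI = ∫ x in (s0 : Set ℝ) \ B, h k x ∂μI + ∫ x in B, h k x ∂μI := by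
        intro k
        rw [← setIntegral_union disjoint_sdiff_left hB (hi k).integrableOn (hi k).integrableOn, sdiff_union_self]
      rw [e n, e N] at c1
      calc _ = ‖(∫ x in (s0 : Set ℝ) \ B, h n x ∂μI + ∫ x in B, h n x ∂μI - (∫ x in (s0 : Set ℝ) \ B, h N x ∂μI + ∫ x in B, h N x ∂μI))
            - (∫ x in (s0 : Set ℝ) \ B, h n x ∂μI - ∫ x in (s0 : Set ℝ) \ B, h N x ∂μI)‖ := by congr 1; ring
        _ ≤ _ := (norm_sub_le _ _).trans (by linarith)
    choose d hd hd' using fun n => ac_of_int (hi n) hε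
    obtain ⟨δ0, hδ0, hmin⟩ : ∃ δ0 : ℝ, 0 < δ0 ∧ ∀ k ≤ N, δ0 ≤ d k := by
      refine ⟨(Finset.range (N + 1)).inf' ⟨0, by simp⟩ d, ?_, fun k hk => Finset.inf'_le _ (by simpa using Nat.lt_succ_of_le hk)⟩
      exact (Finset.lt_inf'_iff _).2 fun k _ => hd k
    refine ⟨min q δ0, lt_min hqp hδ0, fun n B hB hμ => ?_⟩
    have small : ∀ k ≤ N, ‖∫ x in B, h k x ∂μI‖ ≤ ε := fun k hk =>
      hd' k B hB (hμ.trans (ENNReal.ofReal_le_ofReal ((min_le_right _ _).trans (hmin k hk))))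
    rcases le_total n N with hn | hn
    · linarith [small n hn]
    · have h1 := step B hB (hμ.trans (ENNReal.ofReal_le_ofReal (min_le_left _ _))) n hn
      have h2 := small N le_rfl
      calc _ = ‖(∫ x in B, h n x ∂μI - ∫ x in B, h N x ∂μI) + ∫ x in B, h N x ∂μI‖ := by congr 1; ring
        _ ≤ _ := (norm_add_le _ _).trans (by linarith)
  intro ε hε
  obtain ⟨δ, hδ, H⟩ := key (ε / 12) (by positivity)
  refine ⟨δ, hδ, fun n E hE hμ => ?_⟩
  have := abs_int (hi n) hE (ε := 3 * (ε / 12)) fun B hBE hB => H n B hB ((measure_mono hBE).trans hμ)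
  refine this.trans (le_of_eq ?_)
  congr 1; ring

lemma CT_pf {g : ℝ → ℂ} (hg : Integrable g μI) {z w : ℂ} (hz : z.im ≠ 0) (hw : w.im ≠ 0) (hwz : w ≠ z) :
    CT (fun s => g s * ((s : ℂ) - z)⁻¹) w = (CT g w - CT g z) * (w - z)⁻¹ := by
  have h0 : w - z ≠ 0 := sub_ne_zero.2 hwz
  unfold CT
  rw [← mul_sub, ← integral_sub (CT_int hg hw) (CT_int hg hz), mul_assoc, ← integral_mul_const]
  congr 1
  congr 1; funext s
  have h1 := sub_ne hz s
  have h2 := sub_ne hw s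
  field_simp
  ring

lemma FHT_pf {g : ℝ → ℂ} (hg : LG g) {z : ℂ} (hz : 0 < z.im) :
    ∀ᵐ x ∂μI, FHT (fun s => g s * ((s : ℂ) - z)⁻¹) x = ((x : ℂ) - z)⁻¹ * (FHT g x - CT g z) := by
  have hgi := hg.integrable
  have hp : Integrable (fun s : ℝ => g s * ((s : ℂ) - z)⁻¹) μI :=
    (CT_int hgi hz.ne').congr (Eventually.of_forall fun x => div_eq_mul_inv _ _)
  filter_upwards [bv_upper hgi, bv_upper hp] with x h1 h2
  have hxz := sub_ne hz.ne' x
  have hc : Tendsto (fun ε : ℝ => ((x : ℂ) + ε * Complex.I - z)) (𝓝[>] 0) (𝓝 ((x : ℂ) - z)) := by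
    have : Continuous (fun ε : ℝ => ((x : ℂ) + ε * Complex.I - z)) := by fun_prop
    have := (this.tendsto 0).mono_left (nhdsWithin_le_nhds (s := Ioi (0 : ℝ)))
    simpa using this
  have h3 := (h1.2.sub_const (CT g z)).mul (hc.inv₀ hxz)
  have h4 : (fun ε : ℝ => CT (fun s => g s * ((s : ℂ) - z)⁻¹) (x + ε * Complex.I)) =ᶠ[𝓝[>] 0]
      fun ε : ℝ => (CT g (x + ε * Complex.I) - CT g z) * ((x : ℂ) + ε * Complex.I - z)⁻¹ := by
    filter_upwards [Ioo_mem_nhdsGT hz] with ε hε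
    refine CT_pf hgi hz.ne' (by simpa using hε.1.ne') fun h => ?_
    have := congrArg Complex.im h
    simp at this
    exact hε.2.ne this
  have h5 := tendsto_nhds_unique (h2.2.congr' h4) h3
  rw [mul_comm, ← sub_eq_zero] 
  have h6 : FHT (fun s => g s * ((s : ℂ) - z)⁻¹) x + Complex.I * (g x * ((x : ℂ) - z)⁻¹) =
     (FHT g x + Complex.I * g x - CT g z) * ((x : ℂ) - z)⁻¹ := h5
  linear_combination h6

theorem main_CT {f g : ℝ → ℂ} (hf : Integrable f μI) (hg : LG g)
    (hfg : ∀ A : Set ℝ, MeasurableSet A → Integrable (fun x => f x * FHT (A.indicator g) x) μI) :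
    Integrable (fun y => g y * FHT f y + f y * FHT g y) μI ∧ ∀ z : ℂ, 0 < z.im →
      CT (fun y => g y * FHT f y + f y * FHT g y) z = CT f z * CT g z := by
  obtain ⟨F, Fm, Fb, Fd, Ft, Fh⟩ := approx hf
  have hfg0 : Integrable (fun x => f x * FHT g x) μI := by simpa using hfg univ MeasurableSet.univ
  have hi : ∀ n, Integrable (fun x => g x * FHT (F n) x) μI := fun n => by
    obtain ⟨M, hM⟩ := Fb n
    exact (parseval (Fm n) hM hg).2.1
  have hdct : ∀ q : ℝ → ℂ, AEStronglyMeasurable q μI → Integrable (fun x => f x * q x) μI →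
      Tendsto (fun n => ∫ x, F n x * q x ∂μI) atTop (𝓝 (∫ x, f x * q x ∂μI)) := by
    intro q hq hfq
    refine tendsto_integral_of_dominated_convergence (fun x => ‖f x * q x‖) (fun n => (Fm n).mul hq) hfq.norm
      (fun n => Eventually.of_forall fun x => ?_) (Eventually.of_forall fun x => (Ft x).mul_const _)
    rw [norm_mul, norm_mul]
    gcongr; exact Fd n x
  have hcA : ∀ A : Set ℝ, MeasurableSet A → CauchySeq fun n => ∫ x in A, g x * FHT (F n) x ∂μI := by
    intro A hA
    have hgA : LG (A.indicator g) := hg.dom (hg.1.indicator hA) (c := 1) fun x => by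
      rw [one_mul]; exact norm_indicator_le_norm_self _ _
    have h1 := (hdct _ (FHT_aesm hgA.integrable) (hfg A hA)).neg.cauchySeq
    refine (congrArg CauchySeq (funext fun n => ?_)).mpr h1
    obtain ⟨M, hM⟩ := Fb n
    rw [(parseval (Fm n) hM hgA).2.2, neg_neg, ← integral_indicator hA]
    congr 1; funext x
    by_cases hx : x ∈ A <;> simp [hx]
  have hu : UAC (fun n x => g x * FHT (F n) x) := vhs hi hcA
  obtain ⟨hgf, hL1⟩ := vitali (v := fun x => g x * FHT f x) (fun n => (hi n).1) hu (by
    filter_upwards [Fh] with x hx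
    exact hx.const_mul _)
  refine ⟨hgf.add hfg0, fun z hz => ?_⟩
  have hgi := hg.integrable
  set φ : ℝ → ℂ := fun s => ((s : ℂ) - z)⁻¹ with hφ
  have φm : AEStronglyMeasurable φ μI := (Continuous.inv₀ (by fun_prop) (sub_ne hz.ne')).aestronglyMeasurable
  set c := |z.im|⁻¹ with hc
  have φb : ∀ s, ‖φ s‖ ≤ c := fun s => kern_norm_le hz.ne' s
  have c0 : 0 ≤ c := by positivity
  have hgφ : LG (fun s => g s * φ s) := hg.dom (hg.1.mul φm) (c := c) fun x => by
    rw [norm_mul, mul_comm]; gcongr; exact φb x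
  have hpf := FHT_pf hg hz
  have hmulφ : ∀ {q : ℝ → ℂ}, Integrable q μI → Integrable (fun x => q x * φ x) μI := fun hq =>
    hq.mul_bdd φm (Eventually.of_forall φb)
  have i1 : Integrable (fun x => f x * FHT g x * φ x) μI := hmulφ hfg0
  have i2 : Integrable (fun x => f x * φ x) μI := hmulφ hf
  have i3 : Integrable (fun x => g x * FHT f x * φ x) μI := hmulφ hgf
  have i4 : Integrable (fun x => f x * FHT (fun s => g s * φ s) x) μI := by
    refine (i1.sub (i2.const_mul (CT g z))).congr ?_
    filter_upwards [hpf] with x hx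
    simp only [Pi.sub_apply]
    rw [hx]; ring
  have l1 := hdct _ (FHT_aesm hgφ.integrable) i4
  have l2 : Tendsto (fun n => ∫ x, g x * FHT (F n) x * φ x ∂μI) atTop (𝓝 (∫ x, g x * FHT f x * φ x ∂μI)) := by
    refine tendsto_integral_of_L1 _ i3.1 (Eventually.of_forall fun n => hmulφ (hi n)) ?_
    have h0 : Tendsto (fun n => ENNReal.ofReal c * ∫⁻ x, ‖g x * FHT (F n) x - g x * FHT f x‖ₑ ∂μI) atTop (𝓝 0) := by
      have := ENNReal.Tendsto.const_mul (a := ENNReal.ofReal c) hL1 (Or.inr ENNReal.ofReal_ne_top)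
      simpa using this
    refine tendsto_of_tendsto_of_tendsto_of_le_of_le tendsto_const_nhds h0 (fun _ => zero_le) fun n => ?_
    show ∫⁻ x, _ ∂μI ≤ ENNReal.ofReal c * ∫⁻ x, ‖g x * FHT (F n) x - g x * FHT f x‖ₑ ∂μI
    rw [← lintegral_const_mul' _ _ ENNReal.ofReal_ne_top]
    refine lintegral_mono fun x => ?_
    rw [← sub_mul, enorm_mul, mul_comm]
    gcongr
    rw [← ofReal_norm]; exact ENNReal.ofReal_le_ofReal (φb x)
  have key : ∫ x, f x * FHT (fun s => g s * φ s) x ∂μI = - ∫ x, g x * FHT f x * φ x ∂μI := by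
    refine tendsto_nhds_unique l1 (l2.neg.congr fun n => ?_)
    obtain ⟨M, hM⟩ := Fb n
    rw [(parseval (Fm n) hM hgφ).2.2]
    congr 2; funext x; ring
  have key2 : ∫ x, f x * FHT (fun s => g s * φ s) x ∂μI = ∫ x, f x * FHT g x * φ x ∂μI - CT g z * ∫ x, f x * φ x ∂μI := by
    rw [← integral_const_mul, ← integral_sub i1 (i2.const_mul (CT g z))]
    refine integral_congr_ae ?_
    filter_upwards [hpf] with x hx
    rw [hx]; ring
  have e1 : CT (fun y => g y * FHT f y + f y * FHT g y) z =
      (Real.pi : ℂ)⁻¹ * (∫ x, g x * FHT f x * φ x ∂μI + ∫ x, f x * FHT g x * φ x ∂μI) := by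
    unfold CT
    rw [← integral_add i3 i1]
    congr 1; congr 1; funext x
    simp only [hφ, div_eq_mul_inv]; ring
  have e2 : CT f z = (Real.pi : ℂ)⁻¹ * ∫ x, f x * φ x ∂μI := by
    simp only [CT, hφ, div_eq_mul_inv]
  rw [e1, e2]
  linear_combination (Real.pi : ℂ)⁻¹ * (key - key2)

theorem main_thm (f g : ℝ → ℂ) (hf : Integrable f μI) (hg : LG g)
    (hfg : ∀ A : Set ℝ, MeasurableSet A → Integrable (fun x => f x * FHT (A.indicator g) x) μI) :
    ∀ᵐ x ∂μI, FHT (fun y => g y * FHT f y + f y * FHT g y) x = FHT f x * FHT g x - f x * g x := by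
  obtain ⟨hH, h⟩ := main_CT hf hg hfg
  filter_upwards [bv_upper hH, bv_upper hf, bv_upper hg.integrable] with x h1 h2 h3
  have h4 := h2.2.mul h3.2
  have h5 := tendsto_nhds_unique (h1.2.congr' (by
    filter_upwards [self_mem_nhdsWithin] with ε hε
    exact h _ (by simpa using hε))) h4
  have hI : Complex.I * Complex.I = -1 := Complex.I_mul_I
  linear_combination h5 + f x * g x * hI

/-- Poincaré–Bertrand formula: if `f ∈ L¹(-1,1)`, `g ∈ L log L(-1,1)` and `f·T(gχ_A) ∈ L¹`
for every Borel set `A`, then `T(gT(f) + fT(g)) = T(f)T(g) - fg` a.e. on `(-1,1)`. -/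
theorem poincare_bertrand_LlogL (f g : ℝ → ℂ)
    (hf : IntegrableOn f (Set.Ioo (-1 : ℝ) 1))
    (hg : MemLlogL g)
    (hfg : ∀ A : Set ℝ, MeasurableSet A →
      IntegrableOn (fun x => f x * FHT (A.indicator g) x) (Set.Ioo (-1 : ℝ) 1)) :
    ∀ᵐ x ∂μI,
      FHT (fun y => g y * FHT f y + f y * FHT g y) x = FHT f x * FHT g x - f x * g x := by
  exact main_thm f g hf (LG_of_MemLlogL hg) hfg
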